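/- Let c_s ≥ 14, D ≥ 2, q ≤ 1/2, q + 2λ ≤ 1, λ > 0, and 2 ≤ K ≤ n. Assume K ≥ √n and 2·D^{16c_s}·λ ≤ (λ/K + q̄)^{1 − log_n(K)}, where log_n(K) := log K / log n. Then Corr²_{≤D} ≤ (4/n)·D^{−15c_s}. -/

import Mathlib

/-!
The proof exhibits an almost orthogonal basis of the polynomials of degree at most `D` and reads
the low-degree correlation off the coordinates of a polynomial in it.

*The basis.* A graph `G` with at most `D` edges contributes the product, over its connected
components `C`, of the centred monomials `Y^C - E[Y^C]`. A power of a two-valued variable is affine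
in it, so these products span the polynomials of degree at most `D`. Functions of edge sets without
a common vertex are independent; hence two basis functions are orthogonal as soon as a component of
one graph shares no vertex with the other graph.

*Interpolation.* Given the labels, the mixed moment of `Y^G` and `Y^H` factors over edges: an edge
of the symmetric difference contributes `λ` times the indicator that it is monochromatic, a common
edge its conditional variance. If every component of each graph meets the other graph,
monochromaticity of the symmetric difference determines the labels outside the common vertices, at
the price of `1 / K` per vertex. The second moment of a monomial is bounded below either through
the average edge variance or, restricting to monochromatic edges, through the variance within a
community. The first bound leaves a factor `K⁻²` per vertex outside the common part in the squared
normalised Gram entry, the second one only a factor `K⁻¹`. With `t` defined by `n = K ^ (2 - t)`,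
which lies in `[0, 1]` because `√n ≤ K ≤ n`, the assumption on `λ` bounds `λ²` by
`δ = D ^ (-16 c_s)` times the geometric mean of the two variances with exponents `1 - t` and `t`.
Interpolating the two lower bounds with the same exponents therefore produces exactly `n⁻¹` per
vertex and `δ` per edge of the symmetric difference.

*Counting.* When the edges of a graph are revealed one at a time, the discount `1 / n` compensates
the choice of each new vertex, so few graphs remain, and after a rescaling the Gram matrix is
diagonally dominant. A label shift and the independence of components show that the signal is
orthogonal to the basis function of `G` unless `G` is connected and contains both marked vertices;
for such a graph on `v` vertices the normalised squared correlation is at most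
`δ ^ |G| n ^ (-(v - 1))`. The Cauchy–Schwarz inequality and the same counting conclude.
-/

open Classical Finset

noncomputable section

namespace SBM

abbrev Pairs (n : ℕ) := {p : Fin n × Fin n // p.1 < p.2}
abbrev EdgeConf (n : ℕ) := Pairs n → Bool
abbrev Lab (n K : ℕ) := Fin n → Fin K

def Ymat (n : ℕ) (q : ℝ) (y : EdgeConf n) (i j : Fin n) : ℝ :=
  if h : i = j then 0
  else (if y ⟨(min i j, max i j), min_lt_max.mpr h⟩ then 1 else 0) - q

def pEdge (n K : ℕ) (q lam : ℝ) (z : Lab n K) (p : Pairs n) : ℝ :=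
  if z p.1.1 = z p.1.2 then q + lam else q

def wt (n K : ℕ) (q lam : ℝ) (z : Lab n K) (y : EdgeConf n) : ℝ :=
  ((K : ℝ)⁻¹) ^ n *
    ∏ p : Pairs n, (if y p then pEdge n K q lam z p else 1 - pEdge n K q lam z p)

def expec (n K : ℕ) (q lam : ℝ) (F : Lab n K → EdgeConf n → ℝ) : ℝ :=
  ∑ z : Lab n K, ∑ y : EdgeConf n, wt n K q lam z y * F z y

def xind (n K : ℕ) (i0 i1 : Fin n) (z : Lab n K) : ℝ :=
  (if z i0 = z i1 then 1 else 0) - 1 / K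

/-- Evaluation of a polynomial in the variables `(Y_{ij})_{i<j}` at the observed `Y`. -/
def evalY (n : ℕ) (q : ℝ) (f : MvPolynomial (Pairs n) ℝ) (y : EdgeConf n) : ℝ :=
  MvPolynomial.eval (fun p : Pairs n => Ymat n q y p.1.1 p.1.2) f

/-- The squared low-degree correlation `Corr²_{≤ D}`: supremum over polynomials of total
degree at most `D` (with nondegenerate second moment) of `E[f(Y)x]² / E[f(Y)²]`. -/
def Corr2 (n K D : ℕ) (q lam : ℝ) (i0 i1 : Fin n) : ℝ :=
  sSup {r : ℝ | ∃ f : MvPolynomial (Pairs n) ℝ, f.totalDegree ≤ D ∧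
    0 < expec n K q lam (fun _ y => evalY n q f y ^ 2) ∧
    r = expec n K q lam (fun z y => evalY n q f y * xind n K i0 i1 z) ^ 2 /
        expec n K q lam (fun _ y => evalY n q f y ^ 2)}

/-! ### Expectations under product weights -/

section ProductExpectation

variable {ι α : Type*} [Fintype ι] [DecidableEq ι] [Fintype α]

/-- Expectation of `f` under the product of the weights `w i` on the finite type `α`. The weights
may be signed and need not add up to `1`. -/
def prodExp (w : ι → α → ℝ) (f : (ι → α) → ℝ) : ℝ := ∑ x, (∏ i, w i (x i)) * f x

lemma prodExp_prod (w g : ι → α → ℝ) :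
    prodExp w (fun x => ∏ i, g i (x i)) = ∏ i, ∑ a, w i a * g i a := by
  rw [prod_univ_sum, Fintype.piFinset_univ]
  simp only [prodExp, prod_mul_distrib]

lemma prodExp_one {w : ι → α → ℝ} (hw : ∀ i, ∑ a, w i a = 1) : prodExp w (fun _ => 1) = 1 := by
  simpa [hw] using prodExp_prod w (fun _ _ => 1)

lemma prodExp_add (w : ι → α → ℝ) (f g : (ι → α) → ℝ) :
    prodExp w (fun x => f x + g x) = prodExp w f + prodExp w g := by
  simp [prodExp, mul_add, sum_add_distrib]

lemma prodExp_const_mul (w : ι → α → ℝ) (c : ℝ) (f : (ι → α) → ℝ) :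
    prodExp w (fun x => c * f x) = c * prodExp w f := by
  simp only [prodExp, mul_sum, mul_left_comm]

lemma prodExp_sum {κ : Type*} (s : Finset κ) (w : ι → α → ℝ) (f : κ → (ι → α) → ℝ) :
    prodExp w (fun x => ∑ k ∈ s, f k x) = ∑ k ∈ s, prodExp w (f k) := by
  simp only [prodExp, mul_sum]
  exact sum_comm

lemma prodExp_mono {w : ι → α → ℝ} (hw : ∀ i a, 0 ≤ w i a) {f g : (ι → α) → ℝ}
    (h : ∀ x, f x ≤ g x) : prodExp w f ≤ prodExp w g :=
  sum_le_sum fun x _ => mul_le_mul_of_nonneg_left (h x) (prod_nonneg fun i _ => hw i _)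

lemma prodExp_nonneg {w : ι → α → ℝ} (hw : ∀ i a, 0 ≤ w i a) {f : (ι → α) → ℝ}
    (h : ∀ x, 0 ≤ f x) : 0 ≤ prodExp w f :=
  sum_nonneg fun x _ => mul_nonneg (prod_nonneg fun i _ => hw i _) (h x)

lemma sum_sum_piecewise_swap (A : Set ι) [DecidablePred (· ∈ A)]
    (Φ : (ι → α) → (ι → α) → ℝ) :
    ∑ x, ∑ y, Φ (A.piecewise x y) (A.piecewise y x) = ∑ x, ∑ y, Φ x y := by
  have swap_involutive : Function.Involutive (fun p : (ι → α) × (ι → α) =>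
      (A.piecewise p.1 p.2, A.piecewise p.2 p.1)) := by
    rintro ⟨x, y⟩
    ext i <;> by_cases h : i ∈ A <;> simp [h]
  rw [← Fintype.sum_prod_type', ← Fintype.sum_prod_type']
  exact Equiv.sum_comp (swap_involutive.toPerm _) (fun p : (ι → α) × (ι → α) => Φ p.1 p.2)

lemma prodExp_prodExp_piecewise {w w' : ι → α → ℝ} (hw : ∀ i, ∑ a, w i a = 1) {A : Set ι}
    [DecidablePred (· ∈ A)] (hA : ∀ i ∈ A, w i = w' i) (f : (ι → α) → ℝ) :
    prodExp w (fun x => prodExp w' (fun y => f (A.piecewise x y))) = prodExp w' f := by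
  have weights_swap (x y : ι → α) : (∏ i, w i (x i)) * ∏ i, w' i (y i) =
      (∏ i, w' i (A.piecewise x y i)) * ∏ i, w i (A.piecewise y x i) := by
    rw [← prod_mul_distrib, ← prod_mul_distrib]
    refine prod_congr rfl fun i _ => ?_
    by_cases h : i ∈ A
    · simp [h, hA i h]
    · simp [h, mul_comm]
  calc prodExp w (fun x => prodExp w' (fun y => f (A.piecewise x y)))
      = ∑ x, ∑ y, (∏ i, w' i (A.piecewise x y i)) * (∏ i, w i (A.piecewise y x i)) *
          f (A.piecewise x y) := by
        simp only [prodExp, mul_sum, ← mul_assoc, weights_swap]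
    _ = ∑ x, ∑ y : ι → α, (∏ i, w' i (x i)) * (∏ i, w i (y i)) * f x :=
        sum_sum_piecewise_swap A fun x y => (∏ i, w' i (x i)) * (∏ i, w i (y i)) * f x
    _ = prodExp w' f * prodExp w (fun _ => 1) := by
        simp only [prodExp, sum_mul_sum, mul_one, mul_right_comm]
    _ = prodExp w' f := by rw [prodExp_one hw, mul_one]

lemma prodExp_mul_eq_prodExp_mul_prodExp_piecewise {w : ι → α → ℝ} (hw : ∀ i, ∑ a, w i a = 1)
    {A : Set ι} [DecidablePred (· ∈ A)] {f : (ι → α) → ℝ} (hf : DependsOn f A)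
    (g : (ι → α) → ℝ) :
    prodExp w (fun x => f x * g x) =
      prodExp w (fun x => f x * prodExp w (fun y => g (A.piecewise x y))) := by
  have f_piecewise (x y : ι → α) : f (A.piecewise x y) = f x := hf fun i hi => by simp [hi]
  rw [← prodExp_prodExp_piecewise hw (A := A) fun _ _ => rfl]
  simp only [f_piecewise, prodExp_const_mul]

lemma prodExp_mul {w : ι → α → ℝ} (hw : ∀ i, ∑ a, w i a = 1) {A : Set ι}
    {f g : (ι → α) → ℝ} (hf : DependsOn f A) (hg : DependsOn g Aᶜ) :
    prodExp w (fun x => f x * g x) = prodExp w f * prodExp w g := by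
  have g_piecewise (x y : ι → α) : g (A.piecewise x y) = g y :=
    hg fun i hi => by simp [show i ∉ A from hi]
  rw [prodExp_mul_eq_prodExp_mul_prodExp_piecewise hw hf]
  simp only [g_piecewise, mul_comm _ (prodExp w g), prodExp_const_mul]

lemma prodExp_congr_weight {w w' : ι → α → ℝ} (hw : ∀ i, ∑ a, w i a = 1)
    (hw' : ∀ i, ∑ a, w' i a = 1) {A : Set ι} (hA : ∀ i ∈ A, w i = w' i)
    {f : (ι → α) → ℝ} (hf : DependsOn f A) : prodExp w f = prodExp w' f := by
  have f_piecewise (x y : ι → α) : f (A.piecewise x y) = f x := hf fun i hi => by simp [hi]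
  rw [← prodExp_prodExp_piecewise hw hA]
  simp only [f_piecewise]
  congr 1 with x
  simpa [prodExp_one hw'] using (prodExp_const_mul w' (f x) fun _ => 1).symm

end ProductExpectation

/-! ### Edge sets, their vertices and components -/

open scoped symmDiff

/-- A hypergraph whose edges have finitely many, and at least one, end vertices. Through this
class the theory of components does not depend on the encoding of edges as ordered pairs. -/
class Incidence (E : Type*) (V : outParam Type*) where
  /-- The set of end vertices of an edge. -/
  ends : E → Finset V
  ends_nonempty (e : E) : (ends e).Nonempty

open Incidence

section EdgeSets

variable {E V : Type*} [Incidence E V] [DecidableEq V] {B C C' G H : Finset E}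

/-- The vertices touched by a set of edges. -/
def verts (G : Finset E) : Finset V := G.biUnion ends

lemma mem_verts {v : V} : v ∈ verts G ↔ ∃ e ∈ G, v ∈ ends e := mem_biUnion

lemma verts_mono (h : G ⊆ H) : verts G ⊆ verts H := biUnion_subset_biUnion_of_subset_left _ h

lemma ends_subset_verts {e : E} (h : e ∈ G) : ends e ⊆ verts G :=
  subset_biUnion_of_mem ends h

lemma verts_empty : verts (∅ : Finset E) = ∅ := biUnion_empty

lemma disjoint_of_disjoint_verts (h : Disjoint (verts G) (verts H)) : Disjoint G H := by
  rw [disjoint_left] at h ⊢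
  intro e hG hH
  obtain ⟨v, hv⟩ := ends_nonempty e
  exact h (ends_subset_verts hG hv) (ends_subset_verts hH hv)

variable [DecidableEq E]

lemma verts_union (G H : Finset E) : verts (G ∪ H) = verts G ∪ verts H := union_biUnion

lemma disjoint_verts_biUnion {𝒮 : Finset (Finset E)} :
    Disjoint (verts C) (verts (𝒮.biUnion id)) ↔ ∀ C' ∈ 𝒮, Disjoint (verts C) (verts C') := by
  rw [verts, verts, biUnion_biUnion, disjoint_biUnion_right]
  rfl

/-- `C` is a union of connected components of `G`: its edges share no vertex with the other
edges of `G`. -/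
def IsClosedIn (C G : Finset E) : Prop :=
  C ⊆ G ∧ Disjoint (verts C) (verts (G \ C))

lemma isClosedIn_iff : IsClosedIn C G ↔
    C ⊆ G ∧ ∀ e ∈ C, ∀ e' ∈ G, ∀ v, v ∈ ends e → v ∈ ends e' → e' ∈ C := by
  refine and_congr_right fun _ => ?_
  rw [disjoint_left]
  constructor
  · intro h e he e' he' v hv hv'
    by_contra hC
    exact h (mem_verts.2 ⟨e, he, hv⟩) (mem_verts.2 ⟨e', by simp [he', hC], hv'⟩)
  · intro h v hv hv'
    obtain ⟨e, he, hv⟩ := mem_verts.1 hv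
    obtain ⟨e', he', hv'⟩ := mem_verts.1 hv'
    rw [mem_sdiff] at he'
    exact he'.2 (h e he e' he'.1 v hv hv')

lemma isClosedIn_self (G : Finset E) : IsClosedIn G G := ⟨subset_rfl, by simp [verts_empty]⟩

lemma IsClosedIn.inter (hB : IsClosedIn B G) (hC : IsClosedIn C G) : IsClosedIn (B ∩ C) G := by
  rw [isClosedIn_iff] at *
  refine ⟨inter_subset_left.trans hB.1, fun e he e' he' v hv hv' => ?_⟩
  rw [mem_inter] at he ⊢
  exact ⟨hB.2 e he.1 e' he' v hv hv', hC.2 e he.2 e' he' v hv hv'⟩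

lemma IsClosedIn.compl (hC : IsClosedIn C G) : IsClosedIn (G \ C) G :=
  ⟨sdiff_subset, by rw [Finset.sdiff_sdiff_eq_self hC.1]; exact hC.2.symm⟩

lemma IsClosedIn.trans (hB : IsClosedIn B C) (hC : IsClosedIn C G) : IsClosedIn B G := by
  rw [isClosedIn_iff] at *
  refine ⟨hB.1.trans hC.1, fun e he e' he' v hv hv' => ?_⟩
  exact hB.2 e he e' (hC.2 e (hB.1 he) e' he' v hv hv') v hv hv'

lemma IsClosedIn.anti (hB : IsClosedIn B G) (hBC : B ⊆ C) (hCG : C ⊆ G) : IsClosedIn B C :=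
  ⟨hBC, hB.2.mono_right (verts_mono (sdiff_subset_sdiff hCG subset_rfl))⟩

/-- The connected components of the graph with edge set `G`, without isolated vertices, encoded as
the atoms of the Boolean algebra of closed subsets of `G`. -/
def components (G : Finset E) : Finset (Finset E) :=
  {C ∈ G.powerset | IsClosedIn C G ∧ C.Nonempty ∧ ∀ B ⊆ C, B.Nonempty → IsClosedIn B G → B = C}

lemma mem_components : C ∈ components G ↔
    IsClosedIn C G ∧ C.Nonempty ∧ ∀ B ⊆ C, B.Nonempty → IsClosedIn B G → B = C := by
  simp only [components, mem_filter, mem_powerset, and_iff_right_iff_imp]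
  exact fun h => h.1.1

lemma isClosedIn_of_mem_components (h : C ∈ components G) : IsClosedIn C G := (mem_components.1 h).1

lemma subset_of_mem_components (h : C ∈ components G) : C ⊆ G := (isClosedIn_of_mem_components h).1

lemma nonempty_of_mem_components (h : C ∈ components G) : C.Nonempty := (mem_components.1 h).2.1

lemma eq_of_isClosedIn_of_mem_components (hC : C ∈ components G) (hB : IsClosedIn B G)
    (hBne : B.Nonempty) (hBC : B ⊆ C) : B = C :=
  (mem_components.1 hC).2.2 B hBC hBne hB

lemma exists_component_subset (hB : IsClosedIn B G) (hne : B.Nonempty) :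
    ∃ C ∈ components G, C ⊆ B := by
  induction B using Finset.strongInduction with
  | H B ih =>
    by_cases h : B ∈ components G
    · exact ⟨B, h, subset_rfl⟩
    · rw [mem_components] at h
      push Not at h
      obtain ⟨B', hB', hne', hc, hneq⟩ := h hB hne
      obtain ⟨C, hC, hCB⟩ := ih B' (Finset.ssubset_iff_subset_ne.2 ⟨hB', hneq⟩) hc hne'
      exact ⟨C, hC, hCB.trans hB'⟩

lemma disjoint_verts_of_mem_components (hC : C ∈ components G) (hC' : C' ∈ components G)
    (hne : C ≠ C') : Disjoint (verts C) (verts C') := by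
  have hCC' : Disjoint C C' := by
    rw [disjoint_iff_inter_eq_empty]
    by_contra h
    have hne' := nonempty_iff_ne_empty.2 h
    have hcl := (isClosedIn_of_mem_components hC).inter (isClosedIn_of_mem_components hC')
    exact hne ((eq_of_isClosedIn_of_mem_components hC hcl hne' inter_subset_left).symm.trans
      (eq_of_isClosedIn_of_mem_components hC' hcl hne' inter_subset_right))
  exact (isClosedIn_of_mem_components hC).2.mono_right
    (verts_mono (subset_sdiff.2 ⟨subset_of_mem_components hC', hCC'.symm⟩))

lemma pairwiseDisjoint_components (G : Finset E) :
    (components G : Set (Finset E)).PairwiseDisjoint id :=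
  fun _ hC _ hC' hne => disjoint_of_disjoint_verts (disjoint_verts_of_mem_components hC hC' hne)

lemma isClosedIn_biUnion {𝒮 : Finset (Finset E)} (h : 𝒮 ⊆ components G) :
    IsClosedIn (𝒮.biUnion id) G := by
  rw [isClosedIn_iff]
  refine ⟨biUnion_subset.2 fun C hC => subset_of_mem_components (h hC), ?_⟩
  intro e he e' he' v hv hv'
  rw [mem_biUnion] at he ⊢
  obtain ⟨C, hC, heC⟩ := he
  exact ⟨C, hC, (isClosedIn_iff.1 (isClosedIn_of_mem_components (h hC))).2 e heC e' he' v hv hv'⟩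

lemma biUnion_components (G : Finset E) : (components G).biUnion id = G := by
  have hcl := isClosedIn_biUnion (subset_refl (components G))
  refine hcl.1.antisymm ?_
  by_contra h
  obtain ⟨C, hC, hCs⟩ := exists_component_subset hcl.compl (sdiff_nonempty.2 h)
  obtain ⟨e, he⟩ := nonempty_of_mem_components hC
  exact (mem_sdiff.1 (hCs he)).2 (mem_biUnion.2 ⟨C, hC, he⟩)

lemma card_components_le (G : Finset E) : #(components G) ≤ #G := by
  calc #(components G) = ∑ C ∈ components G, 1 := card_eq_sum_ones _
    _ ≤ ∑ C ∈ components G, #C := sum_le_sum fun C hC => (nonempty_of_mem_components hC).card_pos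
    _ = #((components G).biUnion id) := (card_biUnion (pairwiseDisjoint_components G)).symm
    _ = #G := by rw [biUnion_components]

lemma exists_mem_verts_symmDiff (hC : C ∈ components G) (hCH : C ∉ components H) :
    ∃ v ∈ verts C, v ∈ verts (G ∆ H) := by
  by_cases hsub : C ⊆ H
  · have not_closed : ¬ IsClosedIn C H := fun hcl =>
      hCH (mem_components.2 ⟨hcl, nonempty_of_mem_components hC, fun B hBC hB hBH =>
        eq_of_isClosedIn_of_mem_components hC
          ((hBH.anti hBC hsub).trans (isClosedIn_of_mem_components hC)) hB hBC⟩)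
    rw [isClosedIn_iff] at not_closed
    push Not at not_closed
    obtain ⟨e, he, e', he', v, hv, hv', heC⟩ := not_closed hsub
    have he'G : e' ∉ G := fun hG =>
      heC ((isClosedIn_iff.1 (isClosedIn_of_mem_components hC)).2 e he e' hG v hv hv')
    exact ⟨v, mem_verts.2 ⟨e, he, hv⟩, mem_verts.2 ⟨e', mem_symmDiff.2 (.inr ⟨he', he'G⟩), hv'⟩⟩
  · obtain ⟨e, he, heH⟩ := not_subset.1 hsub
    obtain ⟨v, hv⟩ := ends_nonempty e
    exact ⟨v, mem_verts.2 ⟨e, he, hv⟩,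
      mem_verts.2 ⟨e, mem_symmDiff.2 (.inl ⟨subset_of_mem_components hC he, heH⟩), hv⟩⟩

lemma card_components_sdiff_le (G H : Finset E) :
    #(components G \ components H) ≤ #(verts (G ∆ H)) := by
  have touch (C) (hC : C ∈ components G \ components H) : ∃ v ∈ verts C, v ∈ verts (G ∆ H) :=
    exists_mem_verts_symmDiff (mem_sdiff.1 hC).1 (mem_sdiff.1 hC).2
  rcases (components G \ components H).eq_empty_or_nonempty with h0 | ⟨C₀, hC₀⟩
  · simp [h0]
  have : Nonempty V := ⟨(touch C₀ hC₀).choose⟩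
  choose! v hvC hv using touch
  refine card_le_card_of_injOn v hv fun C hC C' hC' heq => ?_
  by_contra hne
  have hd := disjoint_verts_of_mem_components (mem_sdiff.1 hC).1 (mem_sdiff.1 hC').1 hne
  exact disjoint_left.1 hd (hvC C hC) (heq ▸ hvC C' hC')

end EdgeSets

section Pairs

variable {n : ℕ}

instance : Incidence (Pairs n) (Fin n) where
  ends p := {p.1.1, p.1.2}
  ends_nonempty _ := insert_nonempty _ _

lemma mem_ends {p : Pairs n} {v : Fin n} : v ∈ ends p ↔ v = p.1.1 ∨ v = p.1.2 :=
  mem_insert.trans (or_congr_right mem_singleton)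

lemma left_mem_ends (p : Pairs n) : p.1.1 ∈ ends p := mem_ends.2 (.inl rfl)

lemma right_mem_ends (p : Pairs n) : p.1.2 ∈ ends p := mem_ends.2 (.inr rfl)

lemma card_ends (p : Pairs n) : #(ends p) = 2 := card_pair p.2.ne

lemma card_verts_le (G : Finset (Pairs n)) : #(verts G) ≤ 2 * #G := by
  calc #(verts G) ≤ ∑ p ∈ G, #(ends p) := card_biUnion_le
    _ = 2 * #G := by simp [card_ends, mul_comm]

end Pairs

/-! ### Expectations over the labels -/

section Labels

variable {n K : ℕ}

/-- Expectation over i.i.d. uniform labels. -/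
def labelExp (φ : Lab n K → ℝ) : ℝ := prodExp (fun _ _ => (K : ℝ)⁻¹) φ

/-- Indicator that both ends of the edge `p` carry the same label. -/
def sameLabel (z : Lab n K) (p : Pairs n) : ℝ := if z p.1.1 = z p.1.2 then 1 else 0

/-- Indicator that every edge of `F` joins vertices with the same label. -/
def monochromatic (F : Finset (Pairs n)) (z : Lab n K) : ℝ := ∏ p ∈ F, sameLabel z p

lemma sameLabel_nonneg (z : Lab n K) (p : Pairs n) : 0 ≤ sameLabel z p := by
  unfold sameLabel; split_ifs <;> norm_num

lemma sameLabel_le_one (z : Lab n K) (p : Pairs n) : sameLabel z p ≤ 1 := by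
  unfold sameLabel; split_ifs <;> norm_num

lemma monochromatic_nonneg (F : Finset (Pairs n)) (z : Lab n K) : 0 ≤ monochromatic F z :=
  prod_nonneg fun p _ => sameLabel_nonneg z p

lemma monochromatic_eq_ite (F : Finset (Pairs n)) (z : Lab n K) :
    monochromatic F z = if ∀ p ∈ F, z p.1.1 = z p.1.2 then 1 else 0 :=
  prod_ite_zero.trans (by simp)

lemma monochromatic_mul (F F' : Finset (Pairs n)) (z : Lab n K) :
    monochromatic F z * monochromatic F' z = monochromatic (F ∪ F') z := by
  simp only [monochromatic_eq_ite, ite_zero_mul_ite_zero, mul_one, forall_mem_union]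

lemma inv_nat_nonneg : ∀ (_ : Fin n) (_ : Fin K), 0 ≤ (K : ℝ)⁻¹ := fun _ _ => by positivity

lemma sum_inv_nat_eq_one (hK : 0 < K) (_ : Fin n) : ∑ _ : Fin K, (K : ℝ)⁻¹ = 1 := by
  simp [hK.ne']

lemma labelExp_mono {φ ψ : Lab n K → ℝ} (h : ∀ z, φ z ≤ ψ z) : labelExp φ ≤ labelExp ψ :=
  prodExp_mono inv_nat_nonneg h

lemma labelExp_nonneg {φ : Lab n K → ℝ} (h : ∀ z, 0 ≤ φ z) : 0 ≤ labelExp φ :=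
  prodExp_nonneg inv_nat_nonneg h

lemma labelExp_one (hK : 0 < K) : labelExp (fun _ : Lab n K => (1 : ℝ)) = 1 :=
  prodExp_one (sum_inv_nat_eq_one hK)

lemma labelExp_add (φ ψ : Lab n K → ℝ) :
    labelExp (fun z => φ z + ψ z) = labelExp φ + labelExp ψ :=
  prodExp_add _ φ ψ

lemma labelExp_const_mul (c : ℝ) (φ : Lab n K → ℝ) :
    labelExp (fun z => c * φ z) = c * labelExp φ :=
  prodExp_const_mul _ c φ

lemma labelExp_sum {κ : Type*} (s : Finset κ) (φ : κ → Lab n K → ℝ) :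
    labelExp (fun z => ∑ k ∈ s, φ k z) = ∑ k ∈ s, labelExp (φ k) :=
  prodExp_sum s _ φ

lemma labelExp_eq_sum (φ : Lab n K → ℝ) : labelExp φ = (K : ℝ)⁻¹ ^ n * ∑ z, φ z := by
  simp [labelExp, prodExp, mul_sum]

/-- The label vectors, viewed in `(ℤ/K)ⁿ`, for which all edges of `F` are monochromatic. -/
def monochromaticSubgroup [NeZero K] (F : Finset (Pairs n)) : AddSubgroup (Lab n K) where
  carrier := {z | ∀ p ∈ F, z p.1.1 = z p.1.2}
  add_mem' ha hb p hp := by simp [ha p hp, hb p hp]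
  zero_mem' _ _ := rfl
  neg_mem' ha p hp := by simp [ha p hp]

lemma monochromaticSubgroup_union [NeZero K] (F F' : Finset (Pairs n)) :
    monochromaticSubgroup (K := K) (F ∪ F') =
      monochromaticSubgroup F ⊓ monochromaticSubgroup F' := by
  ext z
  exact forall_mem_union

lemma index_monochromaticSubgroup_pos [NeZero K] (F : Finset (Pairs n)) :
    0 < (monochromaticSubgroup (K := K) F).index :=
  Nat.pos_of_ne_zero AddSubgroup.index_ne_zero_of_finite

lemma labelExp_monochromatic [NeZero K] (F : Finset (Pairs n)) :
    labelExp (monochromatic (K := K) F) = ((monochromaticSubgroup (K := K) F).index : ℝ)⁻¹ := by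
  set S := monochromaticSubgroup (K := K) F
  have sum_eq_card : ∑ z, monochromatic (K := K) F z = Nat.card S := by
    simp only [monochromatic_eq_ite]
    rw [sum_boole, Nat.cast_inj]
    exact (Nat.subtype_card _ fun z => mem_filter_univ z).symm
  have lagrange : (Nat.card S : ℝ) * S.index = (K : ℝ) ^ n := by
    rw [← Nat.cast_mul, S.card_mul_index]
    simp
  have card_ne_zero : (Nat.card S : ℝ) ≠ 0 := by exact_mod_cast Nat.card_pos.ne'
  have index_ne_zero : (S.index : ℝ) ≠ 0 := by
    exact_mod_cast (index_monochromaticSubgroup_pos F).ne'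
  rw [labelExp_eq_sum, sum_eq_card, inv_pow, ← lagrange]
  field_simp

/-- Monochromaticity events are positively correlated, because the index of an intersection of
subgroups is at most the product of the indices. -/
lemma labelExp_monochromatic_mul_le (hK : 0 < K) (F F' : Finset (Pairs n)) :
    labelExp (monochromatic (K := K) F) * labelExp (monochromatic (K := K) F') ≤
      labelExp (monochromatic (K := K) (F ∪ F')) := by
  have : NeZero K := ⟨hK.ne'⟩
  simp only [labelExp_monochromatic, ← mul_inv]
  refine inv_anti₀ (by exact_mod_cast index_monochromaticSubgroup_pos _) ?_
  rw [monochromaticSubgroup_union]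
  exact_mod_cast AddSubgroup.index_inf_le

lemma labelExp_monochromatic_mul_prod_le (hK : 0 < K) (C : Finset (Pairs n)) (α β : Pairs n → ℝ)
    (hα : ∀ p, 0 ≤ α p) (hβ : ∀ p, 0 ≤ β p) :
    labelExp (monochromatic (K := K) C) *
        labelExp (fun z : Lab n K => ∏ p, (β p * sameLabel z p + α p)) ≤
      labelExp (fun z : Lab n K => monochromatic C z * ∏ p, (β p * sameLabel z p + α p)) := by
  let coeff (F : Finset (Pairs n)) : ℝ := (∏ p ∈ F, β p) * ∏ p ∈ univ \ F, α p
  have coeff_nonneg (F) : 0 ≤ coeff F :=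
    mul_nonneg (prod_nonneg fun p _ => hβ p) (prod_nonneg fun p _ => hα p)
  have expand (z : Lab n K) : ∏ p, (β p * sameLabel z p + α p) =
      ∑ F ∈ univ.powerset, coeff F * monochromatic F z := by
    simp only [prod_add, prod_mul_distrib, coeff, monochromatic, mul_right_comm]
  have expand_mul (z : Lab n K) : monochromatic C z * ∏ p, (β p * sameLabel z p + α p) =
      ∑ F ∈ univ.powerset, coeff F * monochromatic (C ∪ F) z := by
    simp only [expand, mul_sum, ← monochromatic_mul, mul_left_comm]
  simp only [expand_mul]
  simp only [expand, labelExp_sum, labelExp_const_mul, mul_sum]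
  refine sum_le_sum fun F _ => ?_
  rw [mul_left_comm]
  exact mul_le_mul_of_nonneg_left (labelExp_monochromatic_mul_le hK C F) (coeff_nonneg F)

/-- Shift of the labels in `A` by the colour `a`. -/
def shiftLabels [NeZero K] (A : Finset (Fin n)) (a : Fin K) (z : Lab n K) : Lab n K :=
  fun v => if v ∈ A then z v + a else z v

lemma shiftLabels_bijective [NeZero K] (A : Finset (Fin n)) (a : Fin K) :
    Function.Bijective (shiftLabels (n := n) A a) := by
  refine Function.bijective_iff_has_inverse.2 ⟨shiftLabels A (-a), ?_, ?_⟩ <;>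
  · intro z
    ext v
    by_cases hv : v ∈ A <;> simp [shiftLabels, hv]

/-- The shift of one end makes the label difference of `i` and `j` uniform. -/
lemma labelExp_mul_xind_eq_zero [NeZero K] (A : Finset (Fin n)) {i j : Fin n} (hi : i ∈ A)
    (hj : j ∉ A) (φ : Lab n K → ℝ) (hφ : ∀ a z, φ (shiftLabels A a z) = φ z) :
    labelExp (fun z => φ z * xind n K i j z) = 0 := by
  have hK : (K : ℝ) ≠ 0 := NeZero.ne _
  have sum_shift (a : Fin K) : ∑ z : Lab n K, φ z * xind n K i j z =
      ∑ z : Lab n K, φ z * ((if z i + a = z j then 1 else 0) - 1 / (K : ℝ)) := by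
    rw [← (shiftLabels_bijective A a).sum_comp]
    simp only [hφ, xind, shiftLabels, hi, hj, if_true, if_false]
  have average_shift (z : Lab n K) :
      ∑ a : Fin K, ((if z i + a = z j then 1 else 0) - 1 / (K : ℝ)) = 0 := by
    simp [← eq_sub_iff_add_eq', hK]
  have K_mul_sum : (K : ℝ) * ∑ z : Lab n K, φ z * xind n K i j z = 0 := by
    calc (K : ℝ) * ∑ z : Lab n K, φ z * xind n K i j z
        = ∑ _a : Fin K, ∑ z : Lab n K, φ z * xind n K i j z := by simp
      _ = ∑ a : Fin K, ∑ z : Lab n K,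
            φ z * ((if z i + a = z j then 1 else 0) - 1 / (K : ℝ)) :=
          sum_congr rfl fun a _ => sum_shift a
      _ = 0 := by
          rw [sum_comm]
          simp only [← mul_sum, average_shift, mul_zero, sum_const_zero]
  rw [labelExp_eq_sum, (mul_eq_zero_iff_left hK).1 K_mul_sum, mul_zero]

lemma labelExp_monochromatic_singleton (hK : 0 < K) (p : Pairs n) :
    labelExp (monochromatic (K := K) {p}) = (K : ℝ)⁻¹ := by
  have : NeZero K := ⟨hK.ne'⟩
  have h := labelExp_mul_xind_eq_zero (K := K) {p.1.1} (mem_singleton_self _)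
    (mem_singleton.not.2 p.2.ne') (fun _ => 1) fun _ _ => rfl
  have split (z : Lab n K) : 1 * xind n K p.1.1 p.1.2 z = monochromatic {p} z + -(K : ℝ)⁻¹ * 1 := by
    simp [monochromatic, sameLabel, xind, sub_eq_add_neg]
  simp only [split, labelExp_add, labelExp_const_mul, labelExp_one hK] at h
  linarith

/-- Two label vectors for which `U` is monochromatic differ on a closed subset of `U`. -/
lemma eq_of_monochromatic {U : Finset (Pairs n)} {W : Finset (Fin n)} (hW : W ⊆ verts U)
    (hU : ∀ B, B.Nonempty → IsClosedIn B U → ¬ verts B ⊆ W) {z z' : Lab n K}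
    (hoff : ∀ i ∉ W, z i = z' i) (hz : ∀ p ∈ U, z p.1.1 = z p.1.2)
    (hz' : ∀ p ∈ U, z' p.1.1 = z' p.1.2) {i : Fin n} (hi : i ∈ W) : z i = z' i := by
  let B : Finset (Pairs n) := {p ∈ U | z p.1.1 ≠ z' p.1.1}
  have mem_B {p} (hp : p ∈ U) {v} (hv : v ∈ ends p) : p ∈ B ↔ z v ≠ z' v := by
    rcases mem_ends.1 hv with rfl | rfl
    · simp [B, hp]
    · simp [B, hp, ← hz p hp, ← hz' p hp]
  have B_sub : B ⊆ U := filter_subset _ _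
  have B_closed : IsClosedIn B U := isClosedIn_iff.2 ⟨B_sub, fun p hp p' hp' v hv hv' =>
    (mem_B hp' hv').2 ((mem_B (B_sub hp) hv).1 hp)⟩
  have verts_B : verts B ⊆ W := fun v hv => by
    obtain ⟨p, hp, hvp⟩ := mem_verts.1 hv
    exact not_imp_comm.1 (hoff v) ((mem_B (B_sub hp) hvp).1 hp)
  by_contra hne
  obtain ⟨p, hp, hip⟩ := mem_verts.1 (hW hi)
  exact hU B ⟨p, (mem_B hp hip).2 hne⟩ B_closed verts_B

lemma labelExp_forall_mem_eq (hK : 0 < K) (W : Finset (Fin n)) (g : Lab n K) :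
    labelExp (fun z => if ∀ i ∈ W, z i = g i then 1 else 0) = (K : ℝ)⁻¹ ^ #W := by
  let f (i : Fin n) (a : Fin K) : ℝ := if i ∈ W then if a = g i then 1 else 0 else 1
  have indicator_eq_prod (z : Lab n K) :
      (if ∀ i ∈ W, z i = g i then (1 : ℝ) else 0) = ∏ i, f i (z i) := by
    simp [f, prod_ite_mem, prod_ite_zero]
  have sum_factor (i : Fin n) :
      ∑ a : Fin K, (K : ℝ)⁻¹ * f i a = if i ∈ W then (K : ℝ)⁻¹ else 1 := by
    by_cases hi : i ∈ W <;> simp [f, hi, hK.ne']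
  simp only [labelExp, indicator_eq_prod, prodExp_prod, sum_factor]
  simp [prod_ite_mem]

lemma labelExp_monochromatic_piecewise_le (hK : 0 < K) {U : Finset (Pairs n)} {W : Finset (Fin n)}
    (hW : W ⊆ verts U) (hU : ∀ B, B.Nonempty → IsClosedIn B U → ¬ verts B ⊆ W) (z : Lab n K) :
    labelExp (fun z' => monochromatic U ((W : Set (Fin n))ᶜ.piecewise z z')) ≤
      (K : ℝ)⁻¹ ^ #W := by
  let glue (z' : Lab n K) : Lab n K := (W : Set (Fin n))ᶜ.piecewise z z'
  have glue_off {z'} {i} (hi : i ∉ W) : glue z' i = z i := by simp [glue, hi]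
  have glue_on {z'} {i} (hi : i ∈ W) : glue z' i = z' i := by simp [glue, hi]
  by_cases hex : ∃ g, ∀ p ∈ U, glue g p.1.1 = glue g p.1.2
  · obtain ⟨g, hg⟩ := hex
    rw [← labelExp_forall_mem_eq hK W g]
    refine labelExp_mono fun z' => ?_
    rw [monochromatic_eq_ite]
    split_ifs with hz' hW'
    · rfl
    · refine absurd (fun i hi => ?_) hW'
      simpa only [glue_on hi] using eq_of_monochromatic hW hU
        (fun i hi => (glue_off hi).trans (glue_off hi).symm) hz' hg hi
    · exact zero_le_one
    · rfl
  · have vanish (z' : Lab n K) : monochromatic U (glue z') = 0 := by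
      rw [monochromatic_eq_ite, if_neg (not_exists.1 hex z')]
    calc labelExp (fun z' => monochromatic U (glue z')) = 0 := by
          simp only [vanish, labelExp_eq_sum, sum_const_zero, mul_zero]
      _ ≤ (K : ℝ)⁻¹ ^ #W := by positivity

/-- Monochromaticity of `U` determines the labels on `W` from those off `W`, as soon as no union
of components of `U` lives inside `W`. -/
lemma labelExp_mul_monochromatic_le (hK : 0 < K) {U : Finset (Pairs n)} {W : Finset (Fin n)}
    (hW : W ⊆ verts U) (hU : ∀ B, B.Nonempty → IsClosedIn B U → ¬ verts B ⊆ W)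
    {φ : Lab n K → ℝ} (hφ0 : ∀ z, 0 ≤ φ z) (hφ : DependsOn φ ((W : Set (Fin n))ᶜ)) :
    labelExp (fun z => φ z * monochromatic U z) ≤ (K : ℝ)⁻¹ ^ #W * labelExp φ := by
  rw [labelExp, prodExp_mul_eq_prodExp_mul_prodExp_piecewise (sum_inv_nat_eq_one hK) hφ,
    ← labelExp_const_mul]
  refine labelExp_mono fun z => ?_
  rw [mul_comm]
  exact mul_le_mul_of_nonneg_right (labelExp_monochromatic_piecewise_le hK hW hU z) (hφ0 z)

end Labels

/-! ### Conditional expectation given the labels -/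

section Moments

variable {n K : ℕ} (q lam : ℝ)

/-- The centred observation `Y_p`. -/
def edgeVar (y : EdgeConf n) (p : Pairs n) : ℝ := (if y p then 1 else 0) - q

/-- The monomial `∏_{p ∈ S} Y_p`. -/
def edgeMonomial (S : Finset (Pairs n)) (y : EdgeConf n) : ℝ := ∏ p ∈ S, edgeVar q y p

/-- The law of the edge `p` given the labels. -/
def edgeLaw (z : Lab n K) (p : Pairs n) (b : Bool) : ℝ :=
  if b then pEdge n K q lam z p else 1 - pEdge n K q lam z p

/-- Conditional expectation, given the labels, of a function of the observations. -/
def condExp (z : Lab n K) (F : EdgeConf n → ℝ) : ℝ := prodExp (edgeLaw q lam z) F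

/-- Expectation of a function of the observations. -/
def obsExp (K : ℕ) (F : EdgeConf n → ℝ) : ℝ := labelExp (fun z : Lab n K => condExp q lam z F)

lemma expec_eq_labelExp_condExp (F : EdgeConf n → ℝ) (φ : Lab n K → ℝ) :
    expec n K q lam (fun z y => F y * φ z) = labelExp (fun z => condExp q lam z F * φ z) := by
  simp only [expec, labelExp_eq_sum, condExp, prodExp, mul_sum, sum_mul, wt, edgeLaw, mul_assoc]

lemma expec_eq_obsExp (F : EdgeConf n → ℝ) :
    expec n K q lam (fun _ y => F y) = obsExp q lam K F := by
  simpa [obsExp] using expec_eq_labelExp_condExp (K := K) q lam F (fun _ => 1)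

lemma sum_edgeLaw (z : Lab n K) (p : Pairs n) : ∑ b, edgeLaw q lam z p b = 1 := by
  simp [edgeLaw]

lemma pEdge_eq (z : Lab n K) (p : Pairs n) : pEdge n K q lam z p = q + lam * sameLabel z p := by
  unfold pEdge sameLabel; split_ifs <;> ring

lemma obsExp_add (F R : EdgeConf n → ℝ) :
    obsExp q lam K (fun y => F y + R y) = obsExp q lam K F + obsExp q lam K R := by
  simp only [obsExp, condExp, prodExp_add, labelExp_add]

lemma obsExp_const_mul (c : ℝ) (F : EdgeConf n → ℝ) :
    obsExp q lam K (fun y => c * F y) = c * obsExp q lam K F := by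
  simp only [obsExp, condExp, prodExp_const_mul, labelExp_const_mul]

lemma obsExp_sum {κ : Type*} (s : Finset κ) (F : κ → EdgeConf n → ℝ) :
    obsExp q lam K (fun y => ∑ k ∈ s, F k y) = ∑ k ∈ s, obsExp q lam K (F k) := by
  simp only [obsExp, condExp, prodExp_sum, labelExp_sum]

lemma obsExp_one (hK : 0 < K) : obsExp q lam K (fun _ : EdgeConf n => (1 : ℝ)) = 1 := by
  simp only [obsExp, condExp, prodExp_one (sum_edgeLaw q lam _), labelExp_one hK]

lemma edgeMonomial_dependsOn (S : Finset (Pairs n)) :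
    DependsOn (edgeMonomial q S) (S : Set (Pairs n)) := fun _ _ h =>
  prod_congr rfl fun p hp => by simp only [edgeVar, h p hp]

lemma condExp_dependsOn {F : EdgeConf n → ℝ} {A : Finset (Pairs n)}
    (hF : DependsOn F (A : Set (Pairs n))) :
    DependsOn (fun z : Lab n K => condExp q lam z F) (verts A : Set (Fin n)) := by
  intro z z' h
  refine prodExp_congr_weight (sum_edgeLaw q lam z) (sum_edgeLaw q lam z') (fun p hp => ?_) hF
  funext b
  simp only [edgeLaw, pEdge, h _ (ends_subset_verts hp (left_mem_ends p)),
    h _ (ends_subset_verts hp (right_mem_ends p))]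

lemma labelExp_condExp_mul (hK : 0 < K) {F R : EdgeConf n → ℝ} {φ : Lab n K → ℝ}
    {A B : Finset (Pairs n)} {W : Finset (Fin n)}
    (hF : DependsOn F (A : Set (Pairs n))) (hR : DependsOn R (B : Set (Pairs n)))
    (hφ : DependsOn φ (W : Set (Fin n))) (hAB : Disjoint (verts A) (verts B))
    (hAW : Disjoint (verts A) W) :
    labelExp (fun z => condExp q lam z (fun y => F y * R y) * φ z) =
      obsExp q lam K F * labelExp (fun z => condExp q lam z R * φ z) := by
  have condExp_mul (z : Lab n K) :
      condExp q lam z (fun y => F y * R y) = condExp q lam z F * condExp q lam z R :=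
    prodExp_mul (sum_edgeLaw q lam z) hF
      (hR.mono fun p hpB hpA => disjoint_left.1 (disjoint_of_disjoint_verts hAB) hpA hpB)
  simp only [condExp_mul, mul_assoc]
  refine prodExp_mul (sum_inv_nat_eq_one hK) (condExp_dependsOn q lam hF) fun z z' h => ?_
  have hR_eq := condExp_dependsOn q lam hR fun v hv => h v fun hvA => disjoint_left.1 hAB hvA hv
  have hφ_eq := hφ fun v hv => h v fun hvA => disjoint_left.1 hAW hvA hv
  simp only [hR_eq, hφ_eq]

lemma obsExp_mul (hK : 0 < K) {F R : EdgeConf n → ℝ} {A B : Finset (Pairs n)}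
    (hF : DependsOn F (A : Set (Pairs n))) (hR : DependsOn R (B : Set (Pairs n)))
    (hAB : Disjoint (verts A) (verts B)) :
    obsExp q lam K (fun y => F y * R y) = obsExp q lam K F * obsExp q lam K R := by
  simpa [obsExp] using labelExp_condExp_mul (K := K) (φ := fun _ => 1) (W := ∅) q lam hK hF hR
    (fun _ _ _ => rfl) hAB (by simp)

/-! ### Mixed moments of monomials -/

/-- The mixed moment `E[Y^A Y^B]`. -/
def mixedMoment (K : ℕ) (A B : Finset (Pairs n)) : ℝ :=
  obsExp q lam K (fun y => edgeMonomial q A y * edgeMonomial q B y)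

/-- The conditional second moment `∏_{p ∈ G} E[Y_p² | z]` of the monomial of `G`. -/
def condSecondMoment (G : Finset (Pairs n)) (z : Lab n K) : ℝ :=
  ∏ p ∈ G, (lam * (1 - 2 * q) * sameLabel z p + q * (1 - q))

/-- Constant part of the edge factor in `E[Y^A Y^B | z]`. -/
def edgeConst (A B : Finset (Pairs n)) (p : Pairs n) : ℝ :=
  if p ∈ A then (if p ∈ B then q * (1 - q) else 0) else (if p ∈ B then 0 else 1)

/-- Coefficient of the indicator `sameLabel z p` in the edge factor of `E[Y^A Y^B | z]`. -/
def edgeSlope (A B : Finset (Pairs n)) (p : Pairs n) : ℝ :=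
  if p ∈ A then (if p ∈ B then lam * (1 - 2 * q) else lam) else (if p ∈ B then lam else 0)

lemma mixedMoment_comm (A B : Finset (Pairs n)) :
    mixedMoment q lam K A B = mixedMoment q lam K B A := by
  simp only [mixedMoment, mul_comm]

lemma condExp_edgeMonomial_mul (A B : Finset (Pairs n)) (z : Lab n K) :
    condExp q lam z (fun y => edgeMonomial q A y * edgeMonomial q B y) =
      ∏ p, (edgeSlope q lam A B p * sameLabel z p + edgeConst q A B p) := by
  let factor (S : Finset (Pairs n)) (p : Pairs n) (b : Bool) : ℝ :=
    if p ∈ S then (if b then 1 else 0) - q else 1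
  have edgeMonomial_eq (S) (y : EdgeConf n) : edgeMonomial q S y = ∏ p, factor S p (y p) := by
    simp [factor, edgeMonomial, edgeVar, prod_ite_mem]
  simp only [edgeMonomial_eq, ← prod_mul_distrib, condExp]
  rw [prodExp_prod (edgeLaw q lam z) fun p b => factor A p b * factor B p b]
  refine prod_congr rfl fun p _ => ?_
  simp only [Fintype.sum_bool, edgeLaw, pEdge_eq, edgeSlope, edgeConst, factor]
  by_cases hA : p ∈ A <;> by_cases hB : p ∈ B <;>
    simp only [hA, hB, if_true, if_false, Bool.false_eq_true] <;> ring

lemma condExp_edgeMonomial_mul_eq_pow_mul (G H : Finset (Pairs n)) (z : Lab n K) :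
    condExp q lam z (fun y => edgeMonomial q G y * edgeMonomial q H y) =
      lam ^ #(G ∆ H) * (condSecondMoment q lam (G ∩ H) z * monochromatic (G ∆ H) z) := by
  have edge_factor (p : Pairs n) :
      edgeSlope q lam G H p * sameLabel z p + edgeConst q G H p =
        (if p ∈ G ∩ H then lam * (1 - 2 * q) * sameLabel z p + q * (1 - q) else 1) *
          (if p ∈ G ∆ H then lam * sameLabel z p else 1) := by
    by_cases hG : p ∈ G <;> by_cases hH : p ∈ H <;>
      simp [edgeSlope, edgeConst, mem_symmDiff, hG, hH]
  rw [condExp_edgeMonomial_mul]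
  simp only [edge_factor, prod_mul_distrib, prod_ite_mem, univ_inter, prod_const,
    condSecondMoment, monochromatic]
  ring

lemma condExp_edgeMonomial_sq (G : Finset (Pairs n)) (z : Lab n K) :
    condExp q lam z (fun y => edgeMonomial q G y * edgeMonomial q G y) =
      condSecondMoment q lam G z := by
  simp [condExp_edgeMonomial_mul_eq_pow_mul, monochromatic]

lemma edgeMonomial_empty (y : EdgeConf n) : edgeMonomial q ∅ y = 1 := prod_empty

lemma condExp_edgeMonomial (G : Finset (Pairs n)) (z : Lab n K) :
    condExp q lam z (edgeMonomial q G) = lam ^ #G * monochromatic G z := by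
  have symmDiff_empty : G ∆ ∅ = G := symmDiff_bot G
  have h := condExp_edgeMonomial_mul_eq_pow_mul q lam G ∅ z
  rw [symmDiff_empty, inter_empty] at h
  simpa only [edgeMonomial_empty, condSecondMoment, prod_empty, mul_one, one_mul] using h

lemma mixedMoment_self (G : Finset (Pairs n)) :
    mixedMoment q lam K G G = labelExp (condSecondMoment (K := K) q lam G) := by
  simp only [mixedMoment, obsExp, condExp_edgeMonomial_sq]

end Moments

/-- Standing assumptions on the parameters. -/
structure Admissible (K : ℕ) (q lam : ℝ) : Prop where
  q_nonneg : 0 ≤ q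
  q_le_half : q ≤ 1 / 2
  q_add_le : q + 2 * lam ≤ 1
  lam_pos : 0 < lam
  two_le : 2 ≤ K

/-- The average `q(1 - q) + λ(1 - 2q)/K` of the variance of an edge given its labels. -/
def avgVar (K : ℕ) (q lam : ℝ) : ℝ := lam * (1 - 2 * q) / K + q * (1 - q)

/-- The second moment `p̄ = q(1 - q) + λ(1 - 2q)` of an edge variable within a community. -/
def withinVar (q lam : ℝ) : ℝ := lam * (1 - 2 * q) + q * (1 - q)

namespace Admissible

variable {n K : ℕ} {q lam : ℝ} (h : Admissible K q lam)
include h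

lemma K_pos : 0 < K := by have := h.two_le; omega

lemma bernoulliVar_nonneg : 0 ≤ q * (1 - q) :=
  mul_nonneg h.q_nonneg (by linarith [h.q_le_half])

lemma varGap_nonneg : 0 ≤ lam * (1 - 2 * q) := mul_nonneg h.lam_pos.le (by linarith [h.q_le_half])

lemma avgVar_nonneg : 0 ≤ avgVar K q lam :=
  add_nonneg (div_nonneg h.varGap_nonneg (by positivity)) h.bernoulliVar_nonneg

lemma withinVar_nonneg : 0 ≤ withinVar q lam := add_nonneg h.varGap_nonneg h.bernoulliVar_nonneg

lemma lam_mul_self_le_withinVar : lam * lam ≤ withinVar q lam := by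
  unfold withinVar
  nlinarith [mul_nonneg h.q_nonneg h.lam_pos.le, h.q_nonneg, h.q_le_half, h.q_add_le,
    mul_nonneg h.lam_pos.le (by linarith [h.q_add_le] : 0 ≤ 1 - q - 2 * lam)]

lemma edgeLaw_nonneg (z : Lab n K) (p : Pairs n) (b : Bool) : 0 ≤ edgeLaw q lam z p b := by
  have := h.q_nonneg
  have := h.q_add_le
  have := mul_nonneg h.lam_pos.le (sameLabel_nonneg z p)
  have := mul_le_mul_of_nonneg_left (sameLabel_le_one z p) h.lam_pos.le
  unfold edgeLaw
  rw [pEdge_eq]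
  split_ifs <;> linarith

lemma obsExp_nonneg {F : EdgeConf n → ℝ} (hF : ∀ y, 0 ≤ F y) : 0 ≤ obsExp q lam K F :=
  labelExp_nonneg fun z => prodExp_nonneg (h.edgeLaw_nonneg z) hF

lemma edgeConst_nonneg (A B : Finset (Pairs n)) (p : Pairs n) : 0 ≤ edgeConst q A B p := by
  have := h.bernoulliVar_nonneg
  unfold edgeConst
  split_ifs <;> first | assumption | norm_num

lemma edgeSlope_nonneg (A B : Finset (Pairs n)) (p : Pairs n) : 0 ≤ edgeSlope q lam A B p := by
  have := h.varGap_nonneg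
  have := h.lam_pos.le
  unfold edgeSlope
  split_ifs <;> first | assumption | norm_num

lemma condSecondMoment_nonneg (G : Finset (Pairs n)) (z : Lab n K) :
    0 ≤ condSecondMoment q lam G z :=
  prod_nonneg fun p _ =>
    add_nonneg (mul_nonneg h.varGap_nonneg (sameLabel_nonneg z p)) h.bernoulliVar_nonneg

lemma mixedMoment_nonneg (A B : Finset (Pairs n)) : 0 ≤ mixedMoment q lam K A B := by
  simp only [mixedMoment, obsExp, condExp_edgeMonomial_mul]
  exact labelExp_nonneg fun z => prod_nonneg fun p _ => add_nonneg
    (mul_nonneg (h.edgeSlope_nonneg A B p) (sameLabel_nonneg z p)) (h.edgeConst_nonneg A B p)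

lemma ite_mul_edge_factor_le {A B C : Finset (Pairs n)} (hCA : Disjoint C A) (z : Lab n K)
    (p : Pairs n) :
    (if p ∈ C then lam * sameLabel z p else 1) *
        (edgeSlope q lam A B p * sameLabel z p + edgeConst q A B p) ≤
      edgeSlope q lam (A ∪ C) B p * sameLabel z p + edgeConst q (A ∪ C) B p := by
  by_cases hC : p ∈ C
  · have hA : p ∉ A := disjoint_left.1 hCA hC
    by_cases hB : p ∈ B
    · simp only [edgeSlope, edgeConst, hC, hA, hB, mem_union, or_true, if_true, if_false, add_zero]
      have := h.lam_mul_self_le_withinVar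
      have := h.bernoulliVar_nonneg
      unfold withinVar at *
      unfold sameLabel
      split_ifs <;> nlinarith
    · simp [edgeSlope, edgeConst, hC, hA, hB]
  · simp [edgeSlope, edgeConst, hC]

lemma obsExp_mul_mixedMoment_le {A C : Finset (Pairs n)} (B : Finset (Pairs n))
    (hCA : Disjoint C A) :
    obsExp q lam K (edgeMonomial q C) * mixedMoment q lam K A B ≤
      mixedMoment q lam K (A ∪ C) B := by
  let factor (z : Lab n K) (p : Pairs n) : ℝ :=
    edgeSlope q lam A B p * sameLabel z p + edgeConst q A B p
  have factor_nonneg (z) (p) : 0 ≤ factor z p := add_nonneg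
    (mul_nonneg (h.edgeSlope_nonneg A B p) (sameLabel_nonneg z p)) (h.edgeConst_nonneg A B p)
  have distribute (z : Lab n K) : lam ^ #C * (monochromatic C z * ∏ p, factor z p) =
      ∏ p, (if p ∈ C then lam * sameLabel z p else 1) * factor z p := by
    simp only [prod_mul_distrib, prod_ite_mem, univ_inter, prod_const, monochromatic, mul_assoc]
  simp only [mixedMoment, obsExp, condExp_edgeMonomial, condExp_edgeMonomial_mul,
    labelExp_const_mul]
  calc lam ^ #C * labelExp (monochromatic (K := K) C) * labelExp (fun z => ∏ p, factor z p)
      ≤ lam ^ #C * labelExp (fun z => monochromatic C z * ∏ p, factor z p) := by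
        rw [mul_assoc]
        exact mul_le_mul_of_nonneg_left (labelExp_monochromatic_mul_prod_le h.K_pos C _ _
          (h.edgeConst_nonneg A B) (h.edgeSlope_nonneg A B)) (pow_nonneg h.lam_pos.le _)
    _ ≤ _ := by
        rw [← labelExp_const_mul]
        refine labelExp_mono fun z => ?_
        rw [distribute]
        refine prod_le_prod (fun p _ => mul_nonneg ?_ (factor_nonneg z p))
          fun p _ => h.ite_mul_edge_factor_le hCA z p
        split_ifs
        · exact mul_nonneg h.lam_pos.le (sameLabel_nonneg z p)
        · exact zero_le_one

lemma inv_mul_labelExp_condSecondMoment_le (S : Finset (Pairs n)) (p : Pairs n) :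
    (K : ℝ)⁻¹ * labelExp (condSecondMoment (K := K) q lam S) ≤
      labelExp (fun z : Lab n K => sameLabel z p * condSecondMoment q lam S z) := by
  have positive_correlation := labelExp_monochromatic_mul_prod_le h.K_pos {p} _ _
    (h.edgeConst_nonneg S S) (h.edgeSlope_nonneg S S)
  simp only [labelExp_monochromatic_singleton h.K_pos, ← condExp_edgeMonomial_mul,
    condExp_edgeMonomial_sq] at positive_correlation
  simpa [monochromatic] using positive_correlation

lemma avgVar_pow_mul_le {S U : Finset (Pairs n)} (hSU : Disjoint S U) :
    avgVar K q lam ^ #U * labelExp (condSecondMoment (K := K) q lam S) ≤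
      labelExp (condSecondMoment (K := K) q lam (S ∪ U)) := by
  induction U using Finset.induction_on with
  | empty => simp
  | insert p U hp ih =>
    rw [disjoint_insert_right] at hSU
    have hpSU : p ∉ S ∪ U := by simp [hSU.1, hp]
    have expand : labelExp (condSecondMoment (K := K) q lam (insert p (S ∪ U))) =
        lam * (1 - 2 * q) * labelExp (fun z : Lab n K =>
          sameLabel z p * condSecondMoment q lam (S ∪ U) z) +
        q * (1 - q) * labelExp (condSecondMoment (K := K) q lam (S ∪ U)) := by
      rw [← labelExp_const_mul, ← labelExp_const_mul, ← labelExp_add]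
      congr 1 with z
      rw [condSecondMoment, prod_insert hpSU, ← condSecondMoment]
      ring
    have correlated := mul_le_mul_of_nonneg_left
      (h.inv_mul_labelExp_condSecondMoment_le (S ∪ U) p) h.varGap_nonneg
    have step := mul_le_mul_of_nonneg_left (ih hSU.2) h.avgVar_nonneg
    rw [card_insert_of_notMem hp, union_insert, expand, pow_succ']
    unfold avgVar at *
    linear_combination correlated + step

lemma withinVar_pow_mul_le {S U : Finset (Pairs n)} (hSU : Disjoint S U) :
    withinVar q lam ^ #U *
        labelExp (fun z : Lab n K => condSecondMoment q lam S z * monochromatic U z) ≤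
      labelExp (condSecondMoment (K := K) q lam (S ∪ U)) := by
  rw [← labelExp_const_mul]
  refine labelExp_mono fun z => ?_
  have monochromatic_le : withinVar q lam ^ #U * monochromatic U z ≤
      condSecondMoment q lam U z := by
    rw [monochromatic, ← prod_const, ← prod_mul_distrib]
    refine prod_le_prod (fun p _ => mul_nonneg h.withinVar_nonneg (sameLabel_nonneg z p))
      fun p _ => ?_
    unfold sameLabel withinVar
    split_ifs <;> linarith [h.bernoulliVar_nonneg]
  calc withinVar q lam ^ #U * (condSecondMoment q lam S z * monochromatic U z)
      = condSecondMoment q lam S z * (withinVar q lam ^ #U * monochromatic U z) := by ring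
    _ ≤ condSecondMoment q lam S z * condSecondMoment q lam U z :=
        mul_le_mul_of_nonneg_left monochromatic_le (h.condSecondMoment_nonneg S z)
    _ = condSecondMoment q lam (S ∪ U) z := (prod_union hSU).symm

end Admissible

/-! ### Products of centred components and their moments -/

section Centred

lemma dependsOn_mul {ι : Type*} {α : ι → Type*} {F R : (∀ i, α i) → ℝ} {A : Set ι}
    (hF : DependsOn F A) (hR : DependsOn R A) : DependsOn (fun y => F y * R y) A :=
  fun _ _ h => congrArg₂ _ (hF h) (hR h)

lemma dependsOn_prod {ι κ : Type*} {α : ι → Type*} {s : Finset κ} {F : κ → (∀ i, α i) → ℝ}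
    {A : Set ι} (hF : ∀ k ∈ s, DependsOn (F k) A) : DependsOn (fun y => ∏ k ∈ s, F k y) A :=
  fun _ _ h => prod_congr rfl fun k hk => hF k hk h

variable {n : ℕ} (q lam : ℝ) (K : ℕ)

/-- The centred monomial `Y^C - E[Y^C]`. -/
def centredMonomial (C : Finset (Pairs n)) (y : EdgeConf n) : ℝ :=
  edgeMonomial q C y - obsExp q lam K (edgeMonomial q C)

/-- The basis function attached to `G`: the product over the connected components of `G` of the
centred monomials. -/
def componentProduct (G : Finset (Pairs n)) (y : EdgeConf n) : ℝ :=
  ∏ C ∈ components G, centredMonomial q lam K C y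

/-- The Gram matrix of the functions `componentProduct`. -/
def gram (G H : Finset (Pairs n)) : ℝ :=
  obsExp q lam K (fun y => componentProduct q lam K G y * componentProduct q lam K H y)

lemma gram_comm (G H : Finset (Pairs n)) : gram q lam K G H = gram q lam K H G := by
  simp only [gram, mul_comm]

lemma centredMonomial_dependsOn (C : Finset (Pairs n)) :
    DependsOn (centredMonomial q lam K C) (C : Set (Pairs n)) := fun _ _ h => by
  simp only [centredMonomial, edgeMonomial_dependsOn q C h]

lemma componentProduct_dependsOn (G : Finset (Pairs n)) :
    DependsOn (componentProduct q lam K G) (G : Set (Pairs n)) :=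
  dependsOn_prod fun C hC => (centredMonomial_dependsOn q lam K C).mono
    (coe_subset.2 (subset_of_mem_components hC))

lemma edgeMonomial_union {A C : Finset (Pairs n)} (h : Disjoint A C) (y : EdgeConf n) :
    edgeMonomial q (A ∪ C) y = edgeMonomial q A y * edgeMonomial q C y :=
  prod_union h

lemma edgeMonomial_biUnion {𝒮 : Finset (Finset (Pairs n))}
    (h𝒮 : (𝒮 : Set (Finset (Pairs n))).PairwiseDisjoint id) (y : EdgeConf n) :
    edgeMonomial q (𝒮.biUnion id) y = ∏ C ∈ 𝒮, edgeMonomial q C y :=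
  prod_biUnion h𝒮

lemma prod_components_edgeMonomial (G : Finset (Pairs n)) (y : EdgeConf n) :
    ∏ C ∈ components G, edgeMonomial q C y = edgeMonomial q G y := by
  rw [← edgeMonomial_biUnion q (pairwiseDisjoint_components G), biUnion_components]

variable {K}

lemma obsExp_centredMonomial (hK : 0 < K) (C : Finset (Pairs n)) :
    obsExp q lam K (centredMonomial q lam K C) = 0 := by
  have affine : centredMonomial q lam K C = fun y =>
      edgeMonomial q C y + -obsExp q lam K (edgeMonomial q C) * 1 := by
    funext y; simp [centredMonomial, sub_eq_add_neg]
  rw [affine, obsExp_add, obsExp_const_mul, obsExp_one q lam hK]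
  ring

lemma obsExp_centredMonomial_sq (hK : 0 < K) (C : Finset (Pairs n)) :
    obsExp q lam K (fun y => centredMonomial q lam K C y * centredMonomial q lam K C y) =
      mixedMoment q lam K C C - obsExp q lam K (edgeMonomial q C) ^ 2 := by
  have expand : (fun y => centredMonomial q lam K C y * centredMonomial q lam K C y) = fun y =>
      edgeMonomial q C y * edgeMonomial q C y +
        (-(2 * obsExp q lam K (edgeMonomial q C)) * edgeMonomial q C y +
          obsExp q lam K (edgeMonomial q C) ^ 2 * 1) := by
    funext y; rw [centredMonomial]; ring
  rw [expand, obsExp_add, obsExp_add, obsExp_const_mul, obsExp_const_mul, obsExp_one q lam hK,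
    mixedMoment]
  ring

lemma obsExp_prod_mul (hK : 0 < K) {T : Finset (Finset (Pairs n))}
    (hT : ∀ C ∈ T, ∀ C' ∈ T, C ≠ C' → Disjoint (verts C) (verts C'))
    {g : Finset (Pairs n) → EdgeConf n → ℝ} (hg : ∀ C, DependsOn (g C) (C : Set (Pairs n)))
    {R : EdgeConf n → ℝ} {B : Finset (Pairs n)} (hR : DependsOn R (B : Set (Pairs n)))
    (hB : ∀ C ∈ T, Disjoint (verts C) (verts B)) :
    obsExp q lam K (fun y => (∏ C ∈ T, g C y) * R y) =
      (∏ C ∈ T, obsExp q lam K (g C)) * obsExp q lam K R := by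
  induction T using Finset.induction_on with
  | empty => simp
  | insert C T hC ih =>
    rw [forall_mem_insert] at hB
    have rest_dependsOn : DependsOn (fun y => (∏ C ∈ T, g C y) * R y)
        ((T.biUnion id ∪ B : Finset (Pairs n)) : Set (Pairs n)) := by
      refine dependsOn_mul (dependsOn_prod fun C' hC' => (hg C').mono (coe_subset.2 ?_))
        (hR.mono (coe_subset.2 subset_union_right))
      exact (subset_biUnion_of_mem id hC').trans subset_union_left
    have disjoint_rest : Disjoint (verts C) (verts (T.biUnion id ∪ B)) := by
      rw [verts_union, disjoint_union_right, disjoint_verts_biUnion]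
      exact ⟨fun C' hC' => hT C (mem_insert_self _ _) C' (mem_insert_of_mem hC')
        fun h => hC (h ▸ hC'), hB.1⟩
    simp only [prod_insert hC, mul_assoc]
    rw [obsExp_mul q lam hK (hg C) rest_dependsOn disjoint_rest,
      ih (fun C' h C'' h' => hT C' (mem_insert_of_mem h) C'' (mem_insert_of_mem h')) hB.2]

lemma obsExp_prod_components_mul_prod_components (hK : 0 < K)
    {g : Finset (Pairs n) → EdgeConf n → ℝ} (hg : ∀ C, DependsOn (g C) (C : Set (Pairs n)))
    (G H : Finset (Pairs n)) :
    obsExp q lam K (fun y => (∏ C ∈ components G, g C y) * ∏ C ∈ components H, g C y) =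
      (∏ C ∈ components G ∩ components H, obsExp q lam K (fun y => g C y * g C y)) *
        obsExp q lam K (fun y => (∏ C ∈ components G \ components H, g C y) *
          ∏ C ∈ components H \ components G, g C y) := by
  let 𝒟 := (components G \ components H) ∪ (components H \ components G)
  have split (y : EdgeConf n) :
      (∏ C ∈ components G, g C y) * ∏ C ∈ components H, g C y =
        (∏ C ∈ components G ∩ components H, g C y * g C y) *
          ((∏ C ∈ components G \ components H, g C y) *
            ∏ C ∈ components H \ components G, g C y) := by
    rw [← prod_inter_mul_prod_sdiff (components G) (components H),
      ← prod_inter_mul_prod_sdiff (components H) (components G),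
      inter_comm (components H), prod_mul_distrib]
    ring
  have rest_dependsOn {𝒮} (h𝒮 : 𝒮 ⊆ 𝒟) :
      DependsOn (fun y => ∏ C ∈ 𝒮, g C y) ((𝒟.biUnion id : Finset (Pairs n)) : Set (Pairs n)) :=
    dependsOn_prod fun C hC => (hg C).mono (coe_subset.2 (subset_biUnion_of_mem id (h𝒮 hC)))
  simp only [split]
  refine obsExp_prod_mul q lam hK (B := 𝒟.biUnion id) ?_ (fun C => dependsOn_mul (hg C) (hg C))
    (dependsOn_mul (rest_dependsOn subset_union_left) (rest_dependsOn subset_union_right)) ?_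
  · exact fun C hC C' hC' =>
      disjoint_verts_of_mem_components (mem_inter.1 hC).1 (mem_inter.1 hC').1
  · intro C hC
    rw [mem_inter] at hC
    refine disjoint_verts_biUnion.2 fun C' hC' => ?_
    rcases mem_union.1 hC' with hC' | hC' <;> rw [mem_sdiff] at hC'
    · exact disjoint_verts_of_mem_components hC.1 hC'.1 fun h => hC'.2 (h ▸ hC.2)
    · exact disjoint_verts_of_mem_components hC.2 hC'.1 fun h => hC'.2 (h ▸ hC.1)

lemma obsExp_prod_components_mul_self (hK : 0 < K)
    {g : Finset (Pairs n) → EdgeConf n → ℝ} (hg : ∀ C, DependsOn (g C) (C : Set (Pairs n)))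
    (G : Finset (Pairs n)) :
    obsExp q lam K (fun y => (∏ C ∈ components G, g C y) * ∏ C ∈ components G, g C y) =
      ∏ C ∈ components G, obsExp q lam K (fun y => g C y * g C y) := by
  simp [obsExp_prod_components_mul_prod_components q lam hK hg, obsExp_one q lam hK]

lemma gram_self (hK : 0 < K) (G : Finset (Pairs n)) :
    gram q lam K G G = ∏ C ∈ components G,
      (mixedMoment q lam K C C - obsExp q lam K (edgeMonomial q C) ^ 2) := by
  simp only [gram, componentProduct, obsExp_prod_components_mul_self q lam hK
    (centredMonomial_dependsOn q lam K), obsExp_centredMonomial_sq q lam hK]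

lemma mixedMoment_self_eq_prod_components (hK : 0 < K) (G : Finset (Pairs n)) :
    mixedMoment q lam K G G = ∏ C ∈ components G, mixedMoment q lam K C C := by
  have h := obsExp_prod_components_mul_self q lam hK (edgeMonomial_dependsOn q) G
  simpa only [prod_components_edgeMonomial, mixedMoment] using h

lemma gram_eq_zero_of_disjoint_verts (hK : 0 < K) {G H B : Finset (Pairs n)}
    (hB : IsClosedIn B H) (hne : B.Nonempty) (hd : Disjoint (verts B) (verts G)) :
    gram q lam K G H = 0 := by
  obtain ⟨C, hC, hCB⟩ := exists_component_subset hB hne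
  let rest (y : EdgeConf n) : ℝ :=
    componentProduct q lam K G y * ∏ C' ∈ (components H).erase C, centredMonomial q lam K C' y
  have isolate : (fun y => componentProduct q lam K G y * componentProduct q lam K H y) =
      fun y => centredMonomial q lam K C y * rest y := by
    funext y
    simp only [rest, componentProduct, ← mul_prod_erase _ _ hC]
    ring
  have other_subset {C'} (hC' : C' ∈ (components H).erase C) : C' ⊆ H \ C := by
    rw [mem_erase] at hC'
    exact subset_sdiff.2 ⟨subset_of_mem_components hC'.2,
      disjoint_of_disjoint_verts (disjoint_verts_of_mem_components hC'.2 hC hC'.1)⟩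
  have rest_dependsOn : DependsOn rest ((G ∪ H \ C : Finset (Pairs n)) : Set (Pairs n)) :=
    dependsOn_mul
      ((componentProduct_dependsOn q lam K G).mono (coe_subset.2 subset_union_left))
      (dependsOn_prod fun C' hC' => (centredMonomial_dependsOn q lam K C').mono
        (coe_subset.2 ((other_subset hC').trans subset_union_right)))
  have disjoint_rest : Disjoint (verts C) (verts (G ∪ H \ C)) := by
    rw [verts_union, disjoint_union_right]
    exact ⟨hd.mono_left (verts_mono hCB), (isClosedIn_of_mem_components hC).2⟩
  rw [gram, isolate, obsExp_mul q lam hK (centredMonomial_dependsOn q lam K C) rest_dependsOn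
    disjoint_rest, obsExp_centredMonomial q lam hK, zero_mul]

end Centred

namespace Admissible

variable {n K : ℕ} {q lam : ℝ} (h : Admissible K q lam)
include h

lemma obsExp_edgeMonomial_nonneg (C : Finset (Pairs n)) :
    0 ≤ obsExp q lam K (edgeMonomial q C) := by
  simp only [obsExp, condExp_edgeMonomial]
  exact labelExp_nonneg fun z => mul_nonneg (pow_nonneg h.lam_pos.le _) (monochromatic_nonneg C z)

/-- Expanding one centred monomial doubles the bound at most, because the term with the
expectation in place of the monomial is absorbed by the other one. -/
lemma abs_obsExp_prod_centredMonomial_mul_le {R : EdgeConf n → ℝ} {c : ℝ} {B : Finset (Pairs n)}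
    (hc : 0 ≤ c)
    (hR : ∀ A, |obsExp q lam K (fun y => edgeMonomial q A y * R y)| ≤ c * mixedMoment q lam K A B)
    {𝒜 : Finset (Finset (Pairs n))} (h𝒜 : (𝒜 : Set (Finset (Pairs n))).PairwiseDisjoint id)
    {A : Finset (Pairs n)} (hA : Disjoint (𝒜.biUnion id) A) :
    |obsExp q lam K (fun y =>
        (∏ C ∈ 𝒜, centredMonomial q lam K C y) * (edgeMonomial q A y * R y))| ≤
      c * 2 ^ #𝒜 * mixedMoment q lam K (A ∪ 𝒜.biUnion id) B := by
  induction 𝒜 using Finset.induction_on generalizing A with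
  | empty => simpa using hR A
  | insert C 𝒜 hC ih =>
    let P (A : Finset (Pairs n)) (y : EdgeConf n) : ℝ :=
      (∏ C ∈ 𝒜, centredMonomial q lam K C y) * (edgeMonomial q A y * R y)
    rw [biUnion_insert, id, disjoint_union_left] at hA
    have hC𝒜 : Disjoint C (𝒜.biUnion id) := (disjoint_biUnion_right _ _ _).2 fun C' hC' =>
      h𝒜 (mem_insert_self _ _) (mem_insert_of_mem hC') fun e => hC (e ▸ hC')
    have ih {A} := ih (A := A) (h𝒜.subset (coe_subset.2 (subset_insert _ _)))
    have with_monomial : |obsExp q lam K (P (A ∪ C))| ≤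
        c * 2 ^ #𝒜 * mixedMoment q lam K (A ∪ 𝒜.biUnion id ∪ C) B := by
      rw [union_right_comm]
      exact ih (disjoint_union_right.2 ⟨hA.2, hC𝒜.symm⟩)
    have with_expectation : obsExp q lam K (edgeMonomial q C) * |obsExp q lam K (P A)| ≤
        c * 2 ^ #𝒜 * mixedMoment q lam K (A ∪ 𝒜.biUnion id ∪ C) B := by
      refine (mul_le_mul_of_nonneg_left (ih hA.2) (h.obsExp_edgeMonomial_nonneg C)).trans ?_
      rw [mul_left_comm]
      exact mul_le_mul_of_nonneg_left
        (h.obsExp_mul_mixedMoment_le B (disjoint_union_right.2 ⟨hA.1, hC𝒜⟩)) (by positivity)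
    have expand : (fun y => (∏ C ∈ insert C 𝒜, centredMonomial q lam K C y) *
        (edgeMonomial q A y * R y)) =
        fun y => P (A ∪ C) y + -obsExp q lam K (edgeMonomial q C) * P A y := by
      funext y
      simp only [P, prod_insert hC, edgeMonomial_union q hA.1.symm, centredMonomial]
      ring
    rw [expand, obsExp_add, obsExp_const_mul, card_insert_of_notMem hC, pow_succ, biUnion_insert,
      id, union_comm C, ← union_assoc]
    refine (abs_add_le _ _).trans ?_
    rw [abs_mul, abs_neg, abs_of_nonneg (h.obsExp_edgeMonomial_nonneg C)]
    linarith

lemma abs_obsExp_prod_mul_prod_centredMonomial_le {𝒜 ℬ : Finset (Finset (Pairs n))}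
    (h𝒜 : (𝒜 : Set (Finset (Pairs n))).PairwiseDisjoint id)
    (hℬ : (ℬ : Set (Finset (Pairs n))).PairwiseDisjoint id) :
    |obsExp q lam K (fun y =>
        (∏ C ∈ 𝒜, centredMonomial q lam K C y) * ∏ C ∈ ℬ, centredMonomial q lam K C y)| ≤
      2 ^ (#ℬ + #𝒜) * mixedMoment q lam K (𝒜.biUnion id) (ℬ.biUnion id) := by
  have expand_ℬ (A : Finset (Pairs n)) :
      |obsExp q lam K (fun y =>
          edgeMonomial q A y * ∏ C ∈ ℬ, centredMonomial q lam K C y)| ≤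
        2 ^ #ℬ * mixedMoment q lam K A (ℬ.biUnion id) := by
    have monomials (A' : Finset (Pairs n)) :
        |obsExp q lam K (fun y => edgeMonomial q A' y * edgeMonomial q A y)| ≤
          1 * mixedMoment q lam K A' A := by
      rw [one_mul]
      exact (abs_of_nonneg (h.mixedMoment_nonneg A' A)).le
    simpa only [edgeMonomial_empty, one_mul, empty_union, mul_comm, mixedMoment_comm _ _ A] using
      h.abs_obsExp_prod_centredMonomial_mul_le zero_le_one monomials hℬ (disjoint_empty_right _)
  simpa only [edgeMonomial_empty, one_mul, empty_union, pow_add] using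
    h.abs_obsExp_prod_centredMonomial_mul_le (by positivity) expand_ℬ h𝒜 (disjoint_empty_right _)

/-- The common components factor out exactly, so that only the other ones cost a factor two
each. -/
lemma abs_gram_le (G H : Finset (Pairs n)) :
    |gram q lam K G H| ≤ 16 ^ #(G ∆ H) * mixedMoment q lam K G H := by
  let 𝒢 := components G \ components H
  let ℋ := components H \ components G
  have pow_card_le : (2 : ℝ) ^ (#ℋ + #𝒢) ≤ 16 ^ #(G ∆ H) := by
    have hG : #𝒢 ≤ 2 * #(G ∆ H) := (card_components_sdiff_le G H).trans (card_verts_le _)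
    have hH : #ℋ ≤ 2 * #(G ∆ H) := by
      rw [symmDiff_comm]
      exact (card_components_sdiff_le H G).trans (card_verts_le _)
    calc (2 : ℝ) ^ (#ℋ + #𝒢) ≤ 2 ^ (4 * #(G ∆ H)) := pow_le_pow_right₀ (by norm_num) (by omega)
      _ = 16 ^ #(G ∆ H) := by rw [pow_mul]; norm_num
  have h𝒢 : (𝒢 : Set (Finset (Pairs n))).PairwiseDisjoint id :=
    (pairwiseDisjoint_components G).subset (coe_subset.2 sdiff_subset)
  have hℋ : (ℋ : Set (Finset (Pairs n))).PairwiseDisjoint id :=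
    (pairwiseDisjoint_components H).subset (coe_subset.2 sdiff_subset)
  have rest_le := (h.abs_obsExp_prod_mul_prod_centredMonomial_le h𝒢 hℋ).trans
    (mul_le_mul_of_nonneg_right pow_card_le (h.mixedMoment_nonneg _ _))
  have variance_nonneg (C : Finset (Pairs n)) : 0 ≤ obsExp q lam K (fun y =>
      centredMonomial q lam K C y * centredMonomial q lam K C y) :=
    h.obsExp_nonneg fun _ => mul_self_nonneg _
  have variance_le (C : Finset (Pairs n)) : obsExp q lam K (fun y =>
      centredMonomial q lam K C y * centredMonomial q lam K C y) ≤ mixedMoment q lam K C C := by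
    rw [obsExp_centredMonomial_sq q lam h.K_pos]
    exact sub_le_self _ (sq_nonneg _)
  have mixedMoment_eq : mixedMoment q lam K G H =
      (∏ C ∈ components G ∩ components H, mixedMoment q lam K C C) *
        mixedMoment q lam K (𝒢.biUnion id) (ℋ.biUnion id) := by
    have factor := obsExp_prod_components_mul_prod_components q lam h.K_pos
      (edgeMonomial_dependsOn q) G H
    simp only [prod_components_edgeMonomial] at factor
    simpa only [mixedMoment, edgeMonomial_biUnion q h𝒢, edgeMonomial_biUnion q hℋ] using factor
  simp only [gram, componentProduct]
  rw [obsExp_prod_components_mul_prod_components q lam h.K_pos (centredMonomial_dependsOn q lam K),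
    mixedMoment_eq, abs_mul, abs_of_nonneg (prod_nonneg fun C _ => variance_nonneg C),
    mul_left_comm]
  exact mul_le_mul (prod_le_prod (fun C _ => variance_nonneg C) fun C _ => variance_le C) rest_le
    (abs_nonneg _) (prod_nonneg fun C _ => h.mixedMoment_nonneg C C)

end Admissible

/-! ### Geometric interpolation -/

section Interpolation

/-- The weighted geometric mean `x ^ (1 - t) * y ^ t`. -/
def geomInterp (t x y : ℝ) : ℝ := x ^ (1 - t) * y ^ t

variable {t x y x' y' : ℝ}

lemma geomInterp_nonneg (hx : 0 ≤ x) (hy : 0 ≤ y) : 0 ≤ geomInterp t x y :=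
  mul_nonneg (Real.rpow_nonneg hx _) (Real.rpow_nonneg hy _)

lemma geomInterp_self (ht0 : 0 ≤ t) (ht1 : t ≤ 1) (hx : 0 ≤ x) : geomInterp t x x = x := by
  rw [geomInterp, ← Real.rpow_add_of_nonneg hx (sub_nonneg.2 ht1) ht0, sub_add_cancel,
    Real.rpow_one]

lemma geomInterp_mono (ht0 : 0 ≤ t) (ht1 : t ≤ 1) (hx : 0 ≤ x) (hy : 0 ≤ y) (hxx' : x ≤ x')
    (hyy' : y ≤ y') : geomInterp t x y ≤ geomInterp t x' y' :=
  mul_le_mul (Real.rpow_le_rpow hx hxx' (sub_nonneg.2 ht1)) (Real.rpow_le_rpow hy hyy' ht0)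
    (Real.rpow_nonneg hy _) (Real.rpow_nonneg (hx.trans hxx') _)

lemma geomInterp_mul (hx : 0 ≤ x) (hy : 0 ≤ y) (hx' : 0 ≤ x') (hy' : 0 ≤ y') :
    geomInterp t (x * x') (y * y') = geomInterp t x y * geomInterp t x' y' := by
  rw [geomInterp, Real.mul_rpow hx hx', Real.mul_rpow hy hy', mul_mul_mul_comm]
  rfl

lemma geomInterp_pow (hx : 0 ≤ x) (hy : 0 ≤ y) (m : ℕ) :
    geomInterp t (x ^ m) (y ^ m) = geomInterp t x y ^ m := by
  rw [geomInterp, geomInterp, mul_pow, Real.rpow_pow_comm hx, Real.rpow_pow_comm hy]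

end Interpolation

/-! ### The signal-to-noise regime -/

/-- The consequences of the signal-to-noise assumption that drive the argument: with
`n = K ^ (2 - t)`, the squared signal `λ²` is smaller by a factor `δ` than a geometric mean of the
average and the within-community edge variances. -/
structure Regime (n K : ℕ) (q lam δ t : ℝ) : Prop extends Admissible K q lam where
  t_nonneg : 0 ≤ t
  t_le_one : t ≤ 1
  delta_pos : 0 < δ
  n_eq : (n : ℝ) = (K : ℝ) ^ (2 - t)
  snr : lam ^ 2 ≤ δ * geomInterp t (avgVar K q lam) (withinVar q lam)

namespace Admissible

variable {n K : ℕ} {q lam : ℝ} (h : Admissible K q lam)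
include h

lemma avgVar_pos : 0 < avgVar K q lam := by
  have hK : (0 : ℝ) < K := by exact_mod_cast h.K_pos
  rcases h.q_nonneg.eq_or_lt with hq | hq
  · have := h.lam_pos
    simp only [avgVar, ← hq, mul_zero, sub_zero, mul_one, add_zero]
    positivity
  · exact add_pos_of_nonneg_of_pos (div_nonneg h.varGap_nonneg hK.le)
      (mul_pos hq (by linarith [h.q_le_half]))

lemma div_add_le_two_mul_avgVar : lam / K + q * (1 - q) ≤ 2 * avgVar K q lam := by
  have hK : (2 : ℝ) ≤ K := by exact_mod_cast h.two_le
  have := h.q_nonneg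
  have := h.q_le_half
  have := h.q_add_le
  have := h.lam_pos
  have lam_div_le : lam / K ≤ (1 - q) / 4 := by
    rw [div_le_iff₀ (by linarith)]
    nlinarith
  have excess_le : lam / K * (4 * q - 1) ≤ q * (1 - q) := by
    nlinarith [mul_le_mul_of_nonneg_right lam_div_le h.q_nonneg, div_pos h.lam_pos
      (by linarith : (0 : ℝ) < K)]
  have avgVar_eq : avgVar K q lam = lam / K * (1 - 2 * q) + q * (1 - q) := by
    rw [avgVar, div_mul_eq_mul_div]
  linarith

lemma lam_le_two_mul_withinVar : lam ≤ 2 * withinVar q lam := by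
  unfold withinVar
  nlinarith [h.q_nonneg, h.q_le_half, h.q_add_le, h.lam_pos, mul_nonneg h.q_nonneg h.lam_pos.le,
    mul_nonneg h.q_nonneg (by linarith [h.q_add_le] : 0 ≤ 1 - q - 2 * lam)]

end Admissible

lemma exists_rpow_eq {x y : ℝ} (hx : 1 < x) (hxy : x ≤ y) (hyx : √y ≤ x) :
    ∃ t, 0 ≤ t ∧ t ≤ 1 ∧ y = x ^ (2 - t) ∧ Real.log x / Real.log y * (2 - t) = 1 := by
  have hx0 : 0 < x := by linarith
  have hy0 : 0 < y := by linarith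
  have log_x_pos : 0 < Real.log x := Real.log_pos hx
  have log_le : Real.log x ≤ Real.log y := Real.log_le_log hx0 hxy
  have log_le_two_mul : Real.log y ≤ 2 * Real.log x := by
    have := Real.log_le_log hy0 ((Real.sqrt_le_left hx0.le).1 hyx)
    rwa [Real.log_pow, Nat.cast_ofNat] at this
  refine ⟨2 - Real.log y / Real.log x, ?_, ?_, ?_, ?_⟩
  · linarith [(div_le_iff₀ log_x_pos).2 log_le_two_mul]
  · linarith [(one_le_div log_x_pos).2 log_le]
  · rw [sub_sub_cancel, Real.rpow_def_of_pos hx0, mul_div_cancel₀ _ log_x_pos.ne',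
      Real.exp_log hy0]
  · rw [sub_sub_cancel]
    field_simp [log_x_pos.ne', (log_x_pos.trans_le log_le).ne']

lemma Admissible.exists_regime {n K : ℕ} {q lam M : ℝ} (h : Admissible K q lam) (hKn : K ≤ n)
    (hs : √n ≤ K) (hM : 1 ≤ M)
    (hsnr : 2 * M * lam ≤ (lam / K + q * (1 - q)) ^ (1 - Real.log K / Real.log n)) :
    ∃ t, Regime n K q lam M⁻¹ t := by
  obtain ⟨t, t_nonneg, t_le_one, n_eq, exponent_eq⟩ := exists_rpow_eq (x := K) (y := n)
    (by exact_mod_cast h.two_le) (by exact_mod_cast hKn) hs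
  refine ⟨t, h, t_nonneg, t_le_one, by positivity, n_eq, ?_⟩
  have hl := h.lam_pos
  have hb := h.bernoulliVar_nonneg
  have base_nonneg : 0 ≤ lam / K + q * (1 - q) := by positivity
  have raised : (2 * M * lam) ^ (2 - t) ≤ (lam / K + q * (1 - q)) ^ (1 - t) := by
    have := Real.rpow_le_rpow (by positivity) hsnr (by linarith : 0 ≤ 2 - t)
    rwa [← Real.rpow_mul base_nonneg, sub_mul, exponent_eq, one_mul, sub_sub,
      add_comm t, ← sub_sub, show (2 : ℝ) - 1 = 1 by norm_num] at this
  have two_mul_snr : 2 * M * lam ^ 2 ≤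
      2 * geomInterp t (avgVar K q lam) (withinVar q lam) := by
    calc 2 * M * lam ^ 2
        = (2 * M) ^ (1 : ℝ) * (lam ^ (2 - t) * lam ^ t) := by
          rw [Real.rpow_one, ← Real.rpow_add hl, sub_add_cancel, Real.rpow_two]
      _ ≤ (2 * M) ^ (2 - t) * (lam ^ (2 - t) * lam ^ t) := by
          gcongr <;> linarith
      _ = (2 * M * lam) ^ (2 - t) * lam ^ t := by
          rw [Real.mul_rpow (by positivity) hl.le, mul_assoc]
      _ ≤ geomInterp t (lam / K + q * (1 - q)) lam :=
          mul_le_mul_of_nonneg_right raised (by positivity)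
      _ ≤ geomInterp t (2 * avgVar K q lam) (2 * withinVar q lam) :=
          geomInterp_mono t_nonneg t_le_one base_nonneg hl.le h.div_add_le_two_mul_avgVar
            h.lam_le_two_mul_withinVar
      _ = 2 * geomInterp t (avgVar K q lam) (withinVar q lam) := by
          rw [geomInterp_mul zero_le_two zero_le_two h.avgVar_nonneg h.withinVar_nonneg,
            geomInterp_self t_nonneg t_le_one zero_le_two]
  rw [← div_eq_inv_mul, le_div_iff₀ (by positivity)]
  linarith

namespace Regime

variable {n K : ℕ} {q lam δ t : ℝ} (h : Regime n K q lam δ t)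
include h

lemma one_le_n : (1 : ℝ) ≤ n := by
  rw [h.n_eq]
  exact Real.one_le_rpow (by exact_mod_cast h.K_pos) (by linarith [h.t_le_one])

lemma geomInterp_inv : geomInterp t ((K : ℝ)⁻¹ ^ 2) (K : ℝ)⁻¹ = (n : ℝ)⁻¹ := by
  have hK : (0 : ℝ) < K := by exact_mod_cast h.K_pos
  have hk : (0 : ℝ) < (K : ℝ)⁻¹ := inv_pos.2 hK
  rw [geomInterp, h.n_eq, ← Real.inv_rpow hK.le, ← Real.rpow_two, ← Real.rpow_mul hk.le,
    ← Real.rpow_add hk]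
  congr 1
  ring

/-- The factors `K⁻²` and `K⁻¹` interpolate to `n⁻¹`, while the two variances interpolate to a bound
for `λ² / δ`. -/
lemma lam_sq_pow_mul_le {A x y E : ℝ} (U M : ℕ) (hA : 0 ≤ A) (hx : 0 ≤ x) (hy : 0 ≤ y)
    (hAx : A ≤ ((K : ℝ)⁻¹ ^ 2) ^ M * x) (hAy : A ≤ (K : ℝ)⁻¹ ^ M * y)
    (hxE : avgVar K q lam ^ U * x ≤ E) (hyE : withinVar q lam ^ U * y ≤ E) :
    (lam ^ 2) ^ U * A ≤ δ ^ U * (n : ℝ)⁻¹ ^ M * E := by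
  have hk : (0 : ℝ) ≤ (K : ℝ)⁻¹ := by positivity
  have hδ := h.delta_pos.le
  have hr := h.avgVar_nonneg
  have hp := h.withinVar_nonneg
  have hE : 0 ≤ E := hxE.trans' (by positivity)
  have A_le : A ≤ (n : ℝ)⁻¹ ^ M * geomInterp t x y := by
    rw [← h.geomInterp_inv, ← geomInterp_pow (by positivity) hk,
      ← geomInterp_mul (by positivity) (by positivity) hx hy]
    exact (geomInterp_self h.t_nonneg h.t_le_one hA).symm.trans_le
      (geomInterp_mono h.t_nonneg h.t_le_one hA hA hAx hAy)
  have variance_le :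
      geomInterp t (avgVar K q lam) (withinVar q lam) ^ U * geomInterp t x y ≤ E := by
    rw [← geomInterp_pow hr hp, ← geomInterp_mul (by positivity) (by positivity) hx hy]
    exact (geomInterp_mono h.t_nonneg h.t_le_one (by positivity) (by positivity) hxE hyE).trans_eq
      (geomInterp_self h.t_nonneg h.t_le_one hE)
  calc (lam ^ 2) ^ U * A
      ≤ (δ * geomInterp t (avgVar K q lam) (withinVar q lam)) ^ U *
          ((n : ℝ)⁻¹ ^ M * geomInterp t x y) :=
        mul_le_mul (pow_le_pow_left₀ (sq_nonneg _) h.snr U) A_le hA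
          (pow_nonneg (mul_nonneg hδ (geomInterp_nonneg hr hp)) U)
    _ = δ ^ U * (n : ℝ)⁻¹ ^ M *
          (geomInterp t (avgVar K q lam) (withinVar q lam) ^ U * geomInterp t x y) := by ring
    _ ≤ δ ^ U * (n : ℝ)⁻¹ ^ M * E := mul_le_mul_of_nonneg_left variance_le (by positivity)

end Regime

/-! ### Mixed moments in the regime -/

/-- Every component of `H` shares a vertex with `G`; this is phrased through the closed subsets of
`H`, which are the unions of components. -/
def IsAttached {E V : Type*} [Incidence E V] [DecidableEq V] [DecidableEq E]
    (H G : Finset E) : Prop :=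
  ∀ B, B.Nonempty → IsClosedIn B H → ¬ Disjoint (verts B) (verts G)

lemma card_symmDiff_eq_add {α : Type*} [DecidableEq α] (s t : Finset α) :
    #(s ∆ t) = #(s \ t) + #(t \ s) :=
  card_union_of_disjoint disjoint_sdiff_sdiff

section Attached

variable {n K : ℕ} {G H : Finset (Pairs n)}

lemma monochromatic_dependsOn (S : Finset (Pairs n)) :
    DependsOn (monochromatic (K := K) S) (verts S : Set (Fin n)) := fun _ _ hz =>
  prod_congr rfl fun p hp => by
    simp only [sameLabel, hz _ (ends_subset_verts hp (left_mem_ends p)),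
      hz _ (ends_subset_verts hp (right_mem_ends p))]

lemma condSecondMoment_dependsOn (q lam : ℝ) (S : Finset (Pairs n)) :
    DependsOn (condSecondMoment (K := K) q lam S) (verts S : Set (Fin n)) := fun _ _ hz =>
  prod_congr rfl fun p hp => by
    simp only [sameLabel, hz _ (ends_subset_verts hp (left_mem_ends p)),
      hz _ (ends_subset_verts hp (right_mem_ends p))]

lemma condSecondMoment_empty (q lam : ℝ) :
    condSecondMoment (n := n) (K := K) q lam ∅ = fun _ => 1 :=
  funext fun _ => prod_empty

/-- The edges of `H \ G` tie the vertices of `H` outside `G` to those of `G`, and each such vertex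
costs a factor `1 / K`. -/
lemma labelExp_mul_monochromatic_sdiff_le (hK : 0 < K) (hH : IsAttached H G) {φ : Lab n K → ℝ}
    (hφ0 : ∀ z, 0 ≤ φ z) (hφ : DependsOn φ (verts G : Set (Fin n))) :
    labelExp (fun z => φ z * monochromatic (H \ G) z) ≤
      (K : ℝ)⁻¹ ^ #(verts H \ verts G) * labelExp φ := by
  refine labelExp_mul_monochromatic_le hK ?_ ?_ hφ0 (hφ.mono ?_)
  · intro v hv
    rw [mem_sdiff] at hv
    obtain ⟨p, hp, hvp⟩ := mem_verts.1 hv.1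
    exact mem_verts.2 ⟨p, mem_sdiff.2 ⟨hp, fun h => hv.2 (ends_subset_verts h hvp)⟩, hvp⟩
  · intro B hne hB hW
    have off_G : Disjoint (verts B) (verts G) := disjoint_left.2 fun v hv => (mem_sdiff.1 (hW hv)).2
    refine hH B hne ⟨hB.1.trans sdiff_subset, disjoint_left.2 fun v hv hv' => ?_⟩ off_G
    obtain ⟨p, hp, hvp⟩ := mem_verts.1 hv'
    rw [mem_sdiff] at hp
    by_cases hpG : p ∈ G
    · exact disjoint_left.1 off_G hv (ends_subset_verts hpG hvp)
    · exact disjoint_left.1 hB.2 hv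
        (mem_verts.2 ⟨p, mem_sdiff.2 ⟨mem_sdiff.2 ⟨hp.1, hpG⟩, hp.2⟩, hvp⟩)
  · exact fun v hv => by simp only [Set.mem_compl_iff, mem_coe, mem_sdiff, not_and, not_not]; tauto

lemma Admissible.labelExp_condSecondMoment_mul_monochromatic_sdiff_le {q lam : ℝ}
    (h : Admissible K q lam) (hG : IsAttached G H) :
    labelExp (fun z : Lab n K =>
        condSecondMoment q lam (G ∩ H) z * monochromatic (G \ H) z) ≤
      (K : ℝ)⁻¹ ^ #(verts G \ verts H) * labelExp (condSecondMoment (K := K) q lam (G ∩ H)) :=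
  labelExp_mul_monochromatic_sdiff_le h.K_pos hG (h.condSecondMoment_nonneg _)
    ((condSecondMoment_dependsOn q lam _).mono (verts_mono inter_subset_right))

lemma Admissible.labelExp_condSecondMoment_mul_monochromatic_symmDiff_le {q lam : ℝ}
    (h : Admissible K q lam) (hH : IsAttached H G) :
    labelExp (fun z : Lab n K =>
        condSecondMoment q lam (G ∩ H) z * monochromatic (G ∆ H) z) ≤
      (K : ℝ)⁻¹ ^ #(verts H \ verts G) * labelExp (fun z : Lab n K =>
        condSecondMoment q lam (G ∩ H) z * monochromatic (G \ H) z) := by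
  have split (z : Lab n K) :
      monochromatic (G ∆ H) z = monochromatic (G \ H) z * monochromatic (H \ G) z :=
    (monochromatic_mul _ _ z).symm
  simp only [split, ← mul_assoc]
  refine labelExp_mul_monochromatic_sdiff_le h.K_pos hH
    (fun z => mul_nonneg (h.condSecondMoment_nonneg _ z) (monochromatic_nonneg _ z)) ?_
  exact dependsOn_mul
    ((condSecondMoment_dependsOn q lam _).mono (verts_mono inter_subset_left))
    ((monochromatic_dependsOn _).mono (verts_mono sdiff_subset))

end Attached

lemma self_mem_components {E V : Type*} [Incidence E V] [DecidableEq V] [DecidableEq E]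
    {C G : Finset E} (h : C ∈ components G) :
    C ∈ components C :=
  mem_components.2 ⟨isClosedIn_self C, nonempty_of_mem_components h, fun _ hB hne hBC =>
    eq_of_isClosedIn_of_mem_components h (hBC.trans (isClosedIn_of_mem_components h)) hne hB⟩

section Admissible

variable {n K : ℕ} {q lam : ℝ} (h : Admissible K q lam)
include h

lemma Admissible.avgVar_pow_le (G : Finset (Pairs n)) :
    avgVar K q lam ^ #G ≤ mixedMoment q lam K G G := by
  have := h.avgVar_pow_mul_le (disjoint_empty_left G)
  rw [condSecondMoment_empty, labelExp_one h.K_pos, mul_one, empty_union] at this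
  rwa [mixedMoment_self]

lemma Admissible.mixedMoment_self_pos (G : Finset (Pairs n)) : 0 < mixedMoment q lam K G G :=
  (pow_pos h.avgVar_pos _).trans_le (h.avgVar_pow_le G)

lemma Admissible.withinVar_pow_mul_labelExp_monochromatic_le (G : Finset (Pairs n)) :
    withinVar q lam ^ #G * labelExp (monochromatic (K := K) G) ≤ mixedMoment q lam K G G := by
  have := h.withinVar_pow_mul_le (disjoint_empty_left G)
  simp only [condSecondMoment_empty, one_mul, empty_union] at this
  rwa [mixedMoment_self]

end Admissible

namespace Regime

variable {n K : ℕ} {q lam δ t : ℝ} (h : Regime n K q lam δ t)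
include h

lemma lam_sq_pow_mul_sq_le {a b b' d E E' : ℝ} (u u' m m' : ℕ) (ha : 0 ≤ a) (hb : 0 ≤ b)
    (hb' : 0 ≤ b') (hd : 0 ≤ d) (hbd : b ≤ (K : ℝ)⁻¹ ^ m * d) (hab : a ≤ (K : ℝ)⁻¹ ^ m' * b)
    (hab' : a ≤ (K : ℝ)⁻¹ ^ m * b') (hdE : avgVar K q lam ^ u * d ≤ E)
    (hdE' : avgVar K q lam ^ u' * d ≤ E') (hbE : withinVar q lam ^ u * b ≤ E)
    (hbE' : withinVar q lam ^ u' * b' ≤ E') :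
    (lam ^ 2) ^ (u + u') * a ^ 2 ≤ δ ^ (u + u') * (n : ℝ)⁻¹ ^ (m + m') * (E * E') := by
  have hr := h.avgVar_nonneg
  have hp := h.withinVar_nonneg
  have hE : 0 ≤ E := hdE.trans' (by positivity)
  have had : a ≤ (K : ℝ)⁻¹ ^ (m + m') * d :=
    calc a ≤ (K : ℝ)⁻¹ ^ m' * ((K : ℝ)⁻¹ ^ m * d) := hab.trans (by gcongr)
      _ = (K : ℝ)⁻¹ ^ (m + m') * d := by ring
  refine h.lam_sq_pow_mul_le (x := d ^ 2) (y := b * b') _ _ (sq_nonneg a) (sq_nonneg d)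
    (mul_nonneg hb hb') ?_ ?_ ?_ ?_
  · rw [pow_right_comm, ← mul_pow]
    exact pow_le_pow_left₀ ha had 2
  · calc a ^ 2 = a * a := sq a
      _ ≤ (K : ℝ)⁻¹ ^ m' * b * ((K : ℝ)⁻¹ ^ m * b') :=
          mul_le_mul hab hab' ha (by positivity)
      _ = (K : ℝ)⁻¹ ^ (m + m') * (b * b') := by ring
  · calc avgVar K q lam ^ (u + u') * d ^ 2
        = avgVar K q lam ^ u * d * (avgVar K q lam ^ u' * d) := by ring
      _ ≤ E * E' := mul_le_mul hdE hdE' (by positivity) hE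
  · calc withinVar q lam ^ (u + u') * (b * b')
        = withinVar q lam ^ u * b * (withinVar q lam ^ u' * b') := by ring
      _ ≤ E * E' := mul_le_mul hbE hbE' (by positivity) hE

lemma mixedMoment_sq_le {G H : Finset (Pairs n)} (hG : IsAttached G H) (hH : IsAttached H G) :
    mixedMoment q lam K G H ^ 2 ≤ δ ^ #(G ∆ H) * (n : ℝ)⁻¹ ^ #(verts G ∆ verts H) *
      (mixedMoment q lam K G G * mixedMoment q lam K H H) := by
  have hA := h.toAdmissible
  have second_nonneg := hA.condSecondMoment_nonneg (n := n) (G ∩ H)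
  have moment_nonneg (F : Finset (Pairs n)) : 0 ≤ labelExp fun z : Lab n K =>
      condSecondMoment q lam (G ∩ H) z * monochromatic F z :=
    labelExp_nonneg fun z => mul_nonneg (second_nonneg z) (monochromatic_nonneg F z)
  have symmDiff_le_right := hA.labelExp_condSecondMoment_mul_monochromatic_symmDiff_le hG
  have union_left : G ∩ H ∪ G \ H = G := sup_inf_sdiff G H
  have union_right : G ∩ H ∪ H \ G = H := by rw [inter_comm]; exact sup_inf_sdiff H G
  have disj_left : Disjoint (G ∩ H) (G \ H) := disjoint_inf_sdiff
  have disj_right : Disjoint (G ∩ H) (H \ G) := by rw [inter_comm]; exact disjoint_inf_sdiff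
  have avg_left := hA.avgVar_pow_mul_le disj_left
  have avg_right := hA.avgVar_pow_mul_le disj_right
  have within_left := hA.withinVar_pow_mul_le disj_left
  have within_right := hA.withinVar_pow_mul_le disj_right
  rw [inter_comm, symmDiff_comm] at symmDiff_le_right
  rw [union_left] at avg_left within_left
  rw [union_right] at avg_right within_right
  have mixedMoment_eq : mixedMoment q lam K G H = lam ^ #(G ∆ H) * labelExp fun z : Lab n K =>
      condSecondMoment q lam (G ∩ H) z * monochromatic (G ∆ H) z := by
    simp only [mixedMoment, obsExp, condExp_edgeMonomial_mul_eq_pow_mul, labelExp_const_mul]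
  rw [mixedMoment_eq, mixedMoment_self, mixedMoment_self, mul_pow, pow_right_comm,
    card_symmDiff_eq_add G, card_symmDiff_eq_add (verts G)]
  exact h.lam_sq_pow_mul_sq_le _ _ _ _ (moment_nonneg _) (moment_nonneg _) (moment_nonneg _)
    (labelExp_nonneg second_nonneg)
    (hA.labelExp_condSecondMoment_mul_monochromatic_sdiff_le hG)
    (hA.labelExp_condSecondMoment_mul_monochromatic_symmDiff_le hH) symmDiff_le_right
    avg_left avg_right within_left within_right

lemma gram_sq_le (G H : Finset (Pairs n)) :
    gram q lam K G H ^ 2 ≤ (256 * δ) ^ #(G ∆ H) * (n : ℝ)⁻¹ ^ #(verts G ∆ verts H) *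
      (mixedMoment q lam K G G * mixedMoment q lam K H H) := by
  have bound_nonneg : 0 ≤ (256 * δ) ^ #(G ∆ H) * (n : ℝ)⁻¹ ^ #(verts G ∆ verts H) *
      (mixedMoment q lam K G G * mixedMoment q lam K H H) := by
    have := h.delta_pos
    exact mul_nonneg (by positivity) (mul_pos (h.mixedMoment_self_pos G)
      (h.mixedMoment_self_pos H)).le
  have of_eq_zero (h0 : gram q lam K G H = 0) : gram q lam K G H ^ 2 ≤ _ :=
    (by rw [h0, zero_pow two_ne_zero] : gram q lam K G H ^ 2 = 0).trans_le bound_nonneg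
  by_cases hH : IsAttached H G
  · by_cases hG : IsAttached G H
    · calc gram q lam K G H ^ 2
          ≤ (16 ^ #(G ∆ H) * mixedMoment q lam K G H) ^ 2 :=
            sq_le_sq' (neg_le_of_abs_le (h.abs_gram_le G H)) (le_of_abs_le (h.abs_gram_le G H))
        _ = 256 ^ #(G ∆ H) * mixedMoment q lam K G H ^ 2 := by
            rw [mul_pow, pow_right_comm]; norm_num
        _ ≤ _ := mul_le_mul_of_nonneg_left (h.mixedMoment_sq_le hG hH) (by positivity)
        _ = _ := by rw [mul_pow 256 δ]; ring
    · simp only [IsAttached, not_forall, not_not] at hG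
      obtain ⟨B, hne, hB, hd⟩ := hG
      exact of_eq_zero <|
        (gram_comm q lam K G H).trans (gram_eq_zero_of_disjoint_verts q lam h.K_pos hB hne hd)
  · simp only [IsAttached, not_forall, not_not] at hH
    obtain ⟨B, hne, hB, hd⟩ := hH
    exact of_eq_zero (gram_eq_zero_of_disjoint_verts q lam h.K_pos hB hne hd)

lemma obsExp_edgeMonomial_sq_le {C : Finset (Pairs n)} (hC : C ∈ components C) :
    obsExp q lam K (edgeMonomial q C) ^ 2 ≤
      δ ^ #C * (n : ℝ)⁻¹ ^ (#(verts C) - 1) * mixedMoment q lam K C C := by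
  let m : ℝ := labelExp (monochromatic (n := n) (K := K) C)
  have m_nonneg : 0 ≤ m := labelExp_nonneg fun z => monochromatic_nonneg _ z
  obtain ⟨p, hp⟩ := nonempty_of_mem_components hC
  have hv : p.1.1 ∈ verts C := ends_subset_verts hp (left_mem_ends p)
  have m_le : m ≤ (K : ℝ)⁻¹ ^ (#(verts C) - 1) := by
    have := labelExp_mul_monochromatic_le h.K_pos (erase_subset p.1.1 (verts C))
      (fun B hB hBC hsub => by
        rw [eq_of_isClosedIn_of_mem_components hC hBC hB hBC.1] at hsub
        exact notMem_erase _ _ (hsub hv))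
      (φ := fun _ => 1) (fun _ => zero_le_one) (fun _ _ _ => rfl)
    simpa only [one_mul, labelExp_one h.K_pos, mul_one, card_erase_of_mem hv] using this
  have obsExp_eq : obsExp q lam K (edgeMonomial q C) = lam ^ #C * m := by
    simp only [obsExp, condExp_edgeMonomial, labelExp_const_mul, m]
  rw [obsExp_eq, mul_pow, pow_right_comm]
  refine h.lam_sq_pow_mul_le (x := 1) (y := m) _ _ (sq_nonneg _) zero_le_one m_nonneg ?_ ?_ ?_ ?_
  · rw [mul_one, pow_right_comm]
    exact pow_le_pow_left₀ m_nonneg m_le 2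
  · rw [sq]
    exact mul_le_mul_of_nonneg_right m_le m_nonneg
  · rw [mul_one]
    exact h.avgVar_pow_le C
  · exact h.withinVar_pow_mul_labelExp_monochromatic_le C

lemma one_sub_mul_mixedMoment_le {C : Finset (Pairs n)} (hδ : δ ≤ 1) (hC : C ∈ components C) :
    (1 - δ) * mixedMoment q lam K C C ≤
      mixedMoment q lam K C C - obsExp q lam K (edgeMonomial q C) ^ 2 := by
  have hδ0 := h.delta_pos.le
  have coefficient_le : δ ^ #C * (n : ℝ)⁻¹ ^ (#(verts C) - 1) ≤ δ :=
    (mul_le_of_le_one_right (pow_nonneg hδ0 _)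
      (pow_le_one₀ (by positivity) (inv_le_one_of_one_le₀ h.one_le_n))).trans
      (pow_le_of_le_one hδ0 hδ (nonempty_of_mem_components hC).card_pos.ne')
  linarith [h.obsExp_edgeMonomial_sq_le hC,
    mul_le_mul_of_nonneg_right coefficient_le (h.mixedMoment_self_pos C).le]

lemma half_mixedMoment_le_gram_self {D : ℕ} (hDδ : D * δ ≤ 1 / 2) (hδ : δ ≤ 1)
    {G : Finset (Pairs n)} (hG : #G ≤ D) :
    1 / 2 * mixedMoment q lam K G G ≤ gram q lam K G G := by
  have bernoulli : 1 / 2 ≤ (1 - δ) ^ #(components G) := by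
    have h1 := one_add_mul_le_pow (a := -δ) (by linarith) #(components G)
    have h2 : (#(components G) : ℝ) ≤ D := by exact_mod_cast (card_components_le G).trans hG
    have h3 := mul_le_mul_of_nonneg_right h2 h.delta_pos.le
    rw [← sub_eq_add_neg] at h1
    linarith
  have moment_nonneg (C : Finset (Pairs n)) : 0 ≤ mixedMoment q lam K C C :=
    (h.mixedMoment_self_pos C).le
  rw [gram_self q lam h.K_pos, mixedMoment_self_eq_prod_components q lam h.K_pos]
  calc 1 / 2 * ∏ C ∈ components G, mixedMoment q lam K C C
      ≤ (1 - δ) ^ #(components G) * ∏ C ∈ components G, mixedMoment q lam K C C :=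
        mul_le_mul_of_nonneg_right bernoulli (prod_nonneg fun C _ => moment_nonneg C)
    _ = ∏ C ∈ components G, (1 - δ) * mixedMoment q lam K C C := by
        rw [prod_mul_distrib, prod_const]
    _ ≤ _ := prod_le_prod (fun C _ => mul_nonneg (by linarith) (moment_nonneg C))
        fun C hC => h.one_sub_mul_mixedMoment_le hδ (self_mem_components hC)

end Regime

/-! ### Counting graphs by their number of new vertices -/

lemma sum_powersetCard_succ_le {α : Type*} [DecidableEq α] (s : Finset α) (e : ℕ)
    {f : Finset α → ℝ} (hf : ∀ U, 0 ≤ f U) :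
    ∑ U ∈ powersetCard (e + 1) s, f U ≤ ∑ a ∈ s, ∑ U ∈ powersetCard e s, f (insert a U) := by
  rw [← sum_product (f := fun x : α × Finset α => f (insert x.1 x.2))]
  refine (sum_le_sum_of_subset_of_nonneg (fun U hU => ?_) fun U _ _ => hf U).trans
    (sum_image_le_of_nonneg (g := fun x : α × Finset α => insert x.1 x.2) fun U _ => hf U)
  obtain ⟨U_sub, U_card⟩ := mem_powersetCard.1 hU
  obtain ⟨a, ha⟩ := card_pos.1 (by omega : 0 < #U)
  exact mem_image.2 ⟨(a, U.erase a), mem_product.2 ⟨U_sub ha, mem_powersetCard.2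
    ⟨(erase_subset a U).trans U_sub, by rw [card_erase_of_mem ha, U_card, Nat.add_sub_cancel]⟩⟩,
    insert_erase ha⟩

lemma geom_sum_le_inv_one_sub {θ : ℝ} (h0 : 0 ≤ θ) (h1 : θ < 1) (m : ℕ) :
    ∑ e ∈ range m, θ ^ e ≤ (1 - θ)⁻¹ :=
  ((summable_geometric_of_lt_one h0 h1).sum_le_tsum _ fun _ _ => pow_nonneg h0 _).trans_eq
    (tsum_geometric_of_lt_one h0 h1)

lemma one_add_pow_le_inv_one_sub {η : ℝ} {m : ℕ} (hη : 0 ≤ η) (hm : m * η < 1) :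
    (1 + η) ^ m ≤ (1 - m * η)⁻¹ := by
  calc (1 + η) ^ m ≤ Real.exp η ^ m :=
        pow_le_pow_left₀ (by positivity) (by linarith [Real.add_one_le_exp η]) m
    _ = Real.exp (m * η) := (Real.exp_nat_mul η m).symm
    _ ≤ (1 - m * η)⁻¹ := by
        rw [inv_eq_one_div]
        exact Real.exp_bound_div_one_sub_of_interval (by positivity) hm

section NewVertices

variable {E V : Type*} [Incidence E V] [DecidableEq V] [DecidableEq E]

lemma card_verts_insert_sdiff (e : E) (U : Finset E) (B : Finset V) :
    #(verts (insert e U) \ B) = #(ends e \ B) + #(verts U \ (B ∪ ends e)) := by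
  rw [← card_union_of_disjoint]
  · congr 1
    ext v
    simp only [verts, biUnion_insert, mem_sdiff, mem_union]
    tauto
  · exact disjoint_left.2 fun v => by simp only [mem_sdiff, mem_union]; tauto

lemma verts_sdiff_verts (G H : Finset E) : verts H \ verts G = verts (H \ G) \ verts G := by
  ext v
  simp only [mem_sdiff, mem_verts]
  constructor
  · rintro ⟨⟨e, he, hv⟩, hG⟩
    exact ⟨⟨e, ⟨he, fun h => hG ⟨e, h, hv⟩⟩, hv⟩, hG⟩
  · rintro ⟨⟨e, he, hv⟩, hG⟩
    exact ⟨⟨e, he.1, hv⟩, hG⟩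

end NewVertices

section Counting

variable {n : ℕ}

lemma sum_ite_mem_inv_le (hn : 0 < n) (B : Finset (Fin n)) :
    ∑ i : Fin n, (if i ∈ B then (1 : ℝ) else (n : ℝ)⁻¹) ≤ #B + 1 := by
  calc ∑ i : Fin n, (if i ∈ B then (1 : ℝ) else (n : ℝ)⁻¹)
      ≤ ∑ i : Fin n, ((if i ∈ B then (1 : ℝ) else 0) + (n : ℝ)⁻¹) :=
        sum_le_sum fun i _ => by split_ifs <;> simp
    _ = #B + 1 := by
        rw [sum_add_distrib]
        simp [hn.ne']

lemma inv_pow_card_ends_sdiff (B : Finset (Fin n)) (p : Pairs n) :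
    (n : ℝ)⁻¹ ^ #(ends p \ B) = (if p.1.1 ∈ B then (1 : ℝ) else (n : ℝ)⁻¹) *
      (if p.1.2 ∈ B then (1 : ℝ) else (n : ℝ)⁻¹) := by
  have as_prod : (n : ℝ)⁻¹ ^ #(ends p \ B) =
      ∏ v ∈ ends p, (if v ∈ B then (1 : ℝ) else (n : ℝ)⁻¹) := by
    rw [prod_ite, prod_const_one, prod_const, one_mul, sdiff_eq_filter]
  rw [as_prod]
  exact prod_pair p.2.ne

lemma sum_inv_pow_card_ends_sdiff_le (hn : 0 < n) (B : Finset (Fin n)) :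
    ∑ p : Pairs n, (n : ℝ)⁻¹ ^ #(ends p \ B) ≤ (#B + 1 : ℝ) ^ 2 := by
  let w (i : Fin n) : ℝ := if i ∈ B then 1 else (n : ℝ)⁻¹
  have w_nonneg (i) : 0 ≤ w i := by simp only [w]; split_ifs <;> positivity
  calc ∑ p : Pairs n, (n : ℝ)⁻¹ ^ #(ends p \ B) = ∑ p : Pairs n, w p.1.1 * w p.1.2 :=
        sum_congr rfl fun p _ => inv_pow_card_ends_sdiff B p
    _ = ∑ p : Fin n × Fin n with p.1 < p.2, w p.1 * w p.2 :=
        (sum_subtype _ (by simp) fun p : Fin n × Fin n => w p.1 * w p.2).symm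
    _ ≤ ∑ p : Fin n × Fin n, w p.1 * w p.2 :=
        sum_le_sum_of_subset_of_nonneg (filter_subset _ _)
          fun p _ _ => mul_nonneg (w_nonneg _) (w_nonneg _)
    _ = (∑ i : Fin n, w i) ^ 2 := by rw [sq, sum_mul_sum, Fintype.sum_prod_type]
    _ ≤ (#B + 1 : ℝ) ^ 2 :=
        pow_le_pow_left₀ (sum_nonneg fun i _ => w_nonneg i) (sum_ite_mem_inv_le hn B) 2

/-- The edges are revealed one by one: the discount `1 / n` of a vertex outside `B` pays for the `n`
choices of that vertex. -/
lemma sum_powersetCard_inv_pow_le (hn : 0 < n) (e : ℕ) (B : Finset (Fin n)) :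
    ∑ U ∈ powersetCard e (univ : Finset (Pairs n)), (n : ℝ)⁻¹ ^ #(verts U \ B) ≤
      ((#B + 2 * e + 1 : ℝ) ^ 2) ^ e := by
  induction e generalizing B with
  | zero => simp [verts]
  | succ e ih =>
    have card_union_ends_le (p : Pairs n) : (#(B ∪ ends p) : ℝ) ≤ #B + 2 := by
      have := card_union_le B (ends p)
      rw [card_ends] at this
      exact_mod_cast this
    calc ∑ U ∈ powersetCard (e + 1) (univ : Finset (Pairs n)), (n : ℝ)⁻¹ ^ #(verts U \ B)
        ≤ ∑ p : Pairs n, ∑ U ∈ powersetCard e (univ : Finset (Pairs n)),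
            (n : ℝ)⁻¹ ^ #(verts (insert p U) \ B) :=
          sum_powersetCard_succ_le univ e fun U => by positivity
      _ = ∑ p : Pairs n, (n : ℝ)⁻¹ ^ #(ends p \ B) *
            ∑ U ∈ powersetCard e (univ : Finset (Pairs n)),
              (n : ℝ)⁻¹ ^ #(verts U \ (B ∪ ends p)) := by
          simp only [card_verts_insert_sdiff, pow_add, mul_sum]
      _ ≤ ∑ p : Pairs n, (n : ℝ)⁻¹ ^ #(ends p \ B) *
            ((#B + 2 * (e + 1) + 1 : ℝ) ^ 2) ^ e := by
          refine sum_le_sum fun p _ => mul_le_mul_of_nonneg_left ((ih _).trans ?_) (by positivity)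
          have := card_union_ends_le p
          exact pow_le_pow_left₀ (by positivity)
            (pow_le_pow_left₀ (by positivity) (by linarith) 2) e
      _ ≤ (#B + 1 : ℝ) ^ 2 * ((#B + 2 * (e + 1) + 1 : ℝ) ^ 2) ^ e := by
          rw [← sum_mul]
          exact mul_le_mul_of_nonneg_right (sum_inv_pow_card_ends_sdiff_le hn B) (by positivity)
      _ ≤ (#B + 2 * (e + 1) + 1 : ℝ) ^ 2 * ((#B + 2 * (e + 1) + 1 : ℝ) ^ 2) ^ e := by
          gcongr
          have : (0 : ℝ) ≤ 2 * (e + 1) := by positivity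
          linarith
      _ = _ := by push_cast; ring

/-- The graphs with at most `D` edges, which index the basis of the polynomials of degree at
most `D`. -/
def smallGraphs (n D : ℕ) : Finset (Finset (Pairs n)) := {G | #G ≤ D}

variable {D : ℕ} {G : Finset (Pairs n)}

lemma mem_smallGraphs : G ∈ smallGraphs n D ↔ #G ≤ D := by simp [smallGraphs]

lemma empty_mem_smallGraphs : ∅ ∈ smallGraphs n D := mem_smallGraphs.2 (Nat.zero_le _)

lemma sum_smallGraphs (D : ℕ) (f : Finset (Pairs n) → ℝ) :
    ∑ U ∈ smallGraphs n D, f U =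
      ∑ e ∈ range (D + 1), ∑ U ∈ powersetCard e (univ : Finset (Pairs n)), f U := by
  rw [← sum_fiberwise_of_maps_to (t := range (D + 1)) (g := card)
    fun U hU => mem_range.2 (Nat.lt_succ_of_le (mem_smallGraphs.1 hU))]
  refine sum_congr rfl fun e he => sum_congr ?_ fun _ _ => rfl
  ext U
  have := mem_range.1 he
  simp only [mem_filter, mem_smallGraphs, mem_powersetCard, subset_univ, true_and]
  omega

lemma sum_smallGraphs_weight_le (hn : 0 < n) {b : ℕ} {η : ℝ} (hη : 0 ≤ η) {B : Finset (Fin n)}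
    (hB : #B ≤ b) : ∑ U ∈ smallGraphs n D, η ^ #U * (n : ℝ)⁻¹ ^ #(verts U \ B) ≤
      ∑ e ∈ range (D + 1), (η * (b + 2 * D + 1) ^ 2) ^ e := by
  rw [sum_smallGraphs]
  refine sum_le_sum fun e he => ?_
  have e_le : (e : ℝ) ≤ D := by exact_mod_cast Nat.lt_succ_iff.1 (mem_range.1 he)
  have B_le : (#B : ℝ) ≤ b := by exact_mod_cast hB
  calc ∑ U ∈ powersetCard e (univ : Finset (Pairs n)), η ^ #U * (n : ℝ)⁻¹ ^ #(verts U \ B)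
      = η ^ e * ∑ U ∈ powersetCard e (univ : Finset (Pairs n)), (n : ℝ)⁻¹ ^ #(verts U \ B) := by
        rw [mul_sum]
        exact sum_congr rfl fun U hU => by rw [(mem_powersetCard.1 hU).2]
    _ ≤ η ^ e * ((b + 2 * D + 1 : ℝ) ^ 2) ^ e := by
        refine mul_le_mul_of_nonneg_left ((sum_powersetCard_inv_pow_le hn e B).trans ?_)
          (by positivity)
        gcongr
    _ = _ := (mul_pow _ _ e).symm

lemma sum_smallGraphs_symmDiff_le {η : ℝ} (hη : 0 ≤ η) (G : Finset (Pairs n))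
    {w : Finset (Pairs n) → ℝ} (hw : ∀ U, 0 ≤ w U) :
    ∑ H ∈ smallGraphs n D, η ^ #(G ∆ H) * w (H \ G) ≤
      (1 + η) ^ #G * ∑ U ∈ smallGraphs n D, η ^ #U * w U := by
  have split_injective : Set.InjOn (fun H : Finset (Pairs n) => (G \ H, H \ G))
      (smallGraphs n D) := fun H _ H' _ heq => symmDiff_right_injective G <| by
    simp only [Prod.mk.injEq] at heq
    exact congr_arg₂ (· ∪ ·) heq.1 heq.2
  have split_maps_to : (smallGraphs n D).image (fun H => (G \ H, H \ G)) ⊆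
      G.powerset ×ˢ smallGraphs n D := image_subset_iff.2 fun H hH =>
    mem_product.2 ⟨mem_powerset.2 sdiff_subset,
      mem_smallGraphs.2 ((card_le_card sdiff_subset).trans (mem_smallGraphs.1 hH))⟩
  calc ∑ H ∈ smallGraphs n D, η ^ #(G ∆ H) * w (H \ G)
      = ∑ x ∈ (smallGraphs n D).image (fun H => (G \ H, H \ G)),
          η ^ #x.1 * (η ^ #x.2 * w x.2) := by
        rw [sum_image split_injective]
        exact sum_congr rfl fun H _ => by rw [card_symmDiff_eq_add, pow_add, mul_assoc]
    _ ≤ ∑ x ∈ G.powerset ×ˢ smallGraphs n D, η ^ #x.1 * (η ^ #x.2 * w x.2) :=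
        sum_le_sum_of_subset_of_nonneg split_maps_to fun x _ _ => by
          have := hw x.2
          positivity
    _ = (∑ A ∈ G.powerset, η ^ #A) * ∑ U ∈ smallGraphs n D, η ^ #U * w U := by
        rw [sum_product, sum_mul_sum]
    _ = (1 + η) ^ #G * ∑ U ∈ smallGraphs n D, η ^ #U * w U := by
        congr 1
        simpa [add_comm] using sum_pow_mul_eq_add_pow η 1 G

lemma sum_smallGraphs_erase_self_le (hn : 0 < n) {η : ℝ} (hη : 0 ≤ η)
    (hθ : η * (4 * (D : ℝ) + 1) ^ 2 ≤ 1 / 10) (hG : #G ≤ D) :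
    ∑ H ∈ (smallGraphs n D).erase G, η ^ #(G ∆ H) * (n : ℝ)⁻¹ ^ #(verts H \ verts G) ≤
      1 / 4 := by
  have removed_le : (1 + η) ^ #G ≤ 10 / 9 := by
    have card_le : (#G : ℝ) ≤ D := by exact_mod_cast hG
    have : #G * η ≤ 1 / 10 := by nlinarith [mul_nonneg hη (Nat.cast_nonneg (α := ℝ) D)]
    calc (1 + η) ^ #G ≤ (1 - #G * η)⁻¹ := one_add_pow_le_inv_one_sub hη (by linarith)
      _ ≤ (1 - 1 / 10 : ℝ)⁻¹ := by gcongr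
      _ = 10 / 9 := by norm_num
  have added_le : ∑ U ∈ smallGraphs n D, η ^ #U * (n : ℝ)⁻¹ ^ #(verts U \ verts G) ≤ 10 / 9 := by
    have hθ' : η * ((2 * D : ℕ) + 2 * (D : ℝ) + 1) ^ 2 ≤ 1 / 10 := by
      convert hθ using 3
      push_cast
      ring
    calc ∑ U ∈ smallGraphs n D, η ^ #U * (n : ℝ)⁻¹ ^ #(verts U \ verts G)
        ≤ ∑ e ∈ range (D + 1), (η * ((2 * D : ℕ) + 2 * (D : ℝ) + 1) ^ 2) ^ e :=
          sum_smallGraphs_weight_le hn hη ((card_verts_le G).trans (Nat.mul_le_mul_left 2 hG))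
      _ ≤ (1 - η * ((2 * D : ℕ) + 2 * (D : ℝ) + 1) ^ 2)⁻¹ :=
          geom_sum_le_inv_one_sub (by positivity) (by linarith) _
      _ ≤ (1 - 1 / 10 : ℝ)⁻¹ := by gcongr
      _ = 10 / 9 := by norm_num
  have total_le : ∑ H ∈ smallGraphs n D, η ^ #(G ∆ H) * (n : ℝ)⁻¹ ^ #(verts H \ verts G) ≤
      5 / 4 := by
    calc ∑ H ∈ smallGraphs n D, η ^ #(G ∆ H) * (n : ℝ)⁻¹ ^ #(verts H \ verts G)
        = ∑ H ∈ smallGraphs n D, η ^ #(G ∆ H) * (n : ℝ)⁻¹ ^ #(verts (H \ G) \ verts G) :=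
          sum_congr rfl fun H _ => by rw [verts_sdiff_verts G H]
      _ ≤ (1 + η) ^ #G *
            ∑ U ∈ smallGraphs n D, η ^ #U * (n : ℝ)⁻¹ ^ #(verts U \ verts G) :=
          sum_smallGraphs_symmDiff_le hη G (w := fun U => (n : ℝ)⁻¹ ^ #(verts U \ verts G))
            fun U => by positivity
      _ ≤ 10 / 9 * (10 / 9) := mul_le_mul removed_le added_le
          (sum_nonneg fun U _ => by positivity) (by norm_num)
      _ ≤ 5 / 4 := by norm_num
  have diagonal_eq_one : η ^ #(G ∆ G) * (n : ℝ)⁻¹ ^ #(verts G \ verts G) = 1 := by simp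
  rw [← add_sum_erase _ _ (mem_smallGraphs.2 hG), diagonal_eq_one] at total_le
  linarith

lemma sum_smallGraphs_erase_empty_le (hn : 0 < n) {δ : ℝ} (hδ : 0 ≤ δ)
    (hθ : δ * (2 * (D : ℝ) + 3) ^ 2 ≤ 1 / 2) {B : Finset (Fin n)} (hB : #B ≤ 2) :
    ∑ U ∈ (smallGraphs n D).erase ∅, δ ^ #U * (n : ℝ)⁻¹ ^ #(verts U \ B) ≤
      2 * (δ * (2 * (D : ℝ) + 3) ^ 2) := by
  let θ : ℝ := δ * (2 * D + 3) ^ 2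
  have θ_nonneg : 0 ≤ θ := by positivity
  have θ_eq : δ * ((2 : ℕ) + 2 * (D : ℝ) + 1) ^ 2 = θ := by push_cast; ring
  have geom_le : ∑ e ∈ range D, θ ^ e ≤ 2 := by
    calc ∑ e ∈ range D, θ ^ e ≤ (1 - θ)⁻¹ :=
          geom_sum_le_inv_one_sub θ_nonneg (hθ.trans_lt (by norm_num)) D
      _ ≤ (1 - 1 / 2 : ℝ)⁻¹ := by gcongr
      _ = 2 := by norm_num
  have total_le := sum_smallGraphs_weight_le hn (D := D) hδ hB
  rw [θ_eq, ← add_sum_erase _ _ empty_mem_smallGraphs, sum_range_succ'] at total_le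
  simp only [card_empty, pow_zero, verts_empty, empty_sdiff, one_mul, pow_succ, ← sum_mul]
    at total_le
  linarith [mul_le_mul_of_nonneg_right geom_le θ_nonneg]

end Counting

/-! ### Diagonal dominance of the Gram matrix -/

lemma abs_mul_mul_le_add {u v : ℝ} (hu : 0 < u) (hv : 0 < v) (x y c : ℝ) :
    |x * y * c| ≤ 1 / 2 * (x ^ 2 / u * (|c| * v)) + 1 / 2 * (y ^ 2 / v * (|c| * u)) := by
  have abs_mul_abs_le : |x| * |y| ≤ 1 / 2 * (x ^ 2 / u * v) + 1 / 2 * (y ^ 2 / v * u) := by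
    have square : 1 / 2 * (x ^ 2 / u * v) + 1 / 2 * (y ^ 2 / v * u) - |x| * |y| =
        (|x| * v - |y| * u) ^ 2 / (2 * u * v) := by
      rw [← sq_abs x, ← sq_abs y]
      field_simp
      ring
    have : 0 ≤ (|x| * v - |y| * u) ^ 2 / (2 * u * v) := by positivity
    linarith
  calc |x * y * c| = |x| * |y| * |c| := by rw [abs_mul, abs_mul]
    _ ≤ (1 / 2 * (x ^ 2 / u * v) + 1 / 2 * (y ^ 2 / v * u)) * |c| :=
        mul_le_mul_of_nonneg_right abs_mul_abs_le (abs_nonneg c)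
    _ = 1 / 2 * (x ^ 2 / u * (|c| * v)) + 1 / 2 * (y ^ 2 / v * (|c| * u)) := by ring

lemma half_sum_sq_mul_diag_le_of_weighted_diag_dominant {ι : Type*} [DecidableEq ι]
    {s : Finset ι} {A : ι → ι → ℝ} {w : ι → ℝ} (a : ι → ℝ) (hA : ∀ i j, A i j = A j i)
    (hw : ∀ i, 0 < w i)
    (hdom : ∀ i ∈ s, ∑ j ∈ s.erase i, |A i j| * w j ≤ 1 / 2 * A i i * w i) :
    1 / 2 * ∑ i ∈ s, a i ^ 2 * A i i ≤ ∑ i ∈ s, ∑ j ∈ s, a i * a j * A i j := by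
  let T (i j : ι) : ℝ := a i ^ 2 / w i * (|A i j| * w j)
  have off_diagonal_ge (i j) : -(1 / 2 * T i j + 1 / 2 * T j i) ≤ a i * a j * A i j := by
    simp only [T]
    rw [hA j i]
    linarith [neg_abs_le (a i * a j * A i j),
      abs_mul_mul_le_add (hw i) (hw j) (a i) (a j) (A i j)]
  have swap : ∑ i ∈ s, ∑ j ∈ s.erase i, T j i = ∑ i ∈ s, ∑ j ∈ s.erase i, T i j :=
    sum_comm' fun i j => by simp only [mem_erase]; tauto
  have row_le (i) (hi : i ∈ s) : ∑ j ∈ s.erase i, T i j ≤ 1 / 2 * (a i ^ 2 * A i i) := by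
    have w_pos := hw i
    calc ∑ j ∈ s.erase i, T i j = a i ^ 2 / w i * ∑ j ∈ s.erase i, |A i j| * w j :=
          (mul_sum _ _ _).symm
      _ ≤ a i ^ 2 / w i * (1 / 2 * A i i * w i) :=
          mul_le_mul_of_nonneg_left (hdom i hi) (by positivity)
      _ = 1 / 2 * (a i ^ 2 * A i i) := by field_simp
  calc 1 / 2 * ∑ i ∈ s, a i ^ 2 * A i i
      = ∑ i ∈ s, a i ^ 2 * A i i - ∑ i ∈ s, 1 / 2 * (a i ^ 2 * A i i) := by
        rw [← mul_sum]
        ring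
    _ ≤ ∑ i ∈ s, a i ^ 2 * A i i - ∑ i ∈ s, ∑ j ∈ s.erase i, T i j :=
        sub_le_sub_left (sum_le_sum row_le) _
    _ = ∑ i ∈ s, (a i ^ 2 * A i i +
          ∑ j ∈ s.erase i, -(1 / 2 * T i j + 1 / 2 * T j i)) := by
        simp only [sum_add_distrib, sum_neg_distrib, ← mul_sum, swap]
        ring
    _ ≤ ∑ i ∈ s, (a i * a i * A i i + ∑ j ∈ s.erase i, a i * a j * A i j) := by
        simp only [← sq]
        exact sum_le_sum fun i _ => add_le_add_right (sum_le_sum fun j _ => off_diagonal_ge i j) _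
    _ = ∑ i ∈ s, ∑ j ∈ s, a i * a j * A i j :=
        sum_congr rfl fun i hi => add_sum_erase s (fun j => a i * a j * A i j) hi

section Gram

variable {n K D : ℕ} {q lam δ t : ℝ}

lemma obsExp_sum_componentProduct_sq (q lam : ℝ) (K : ℕ)
    (s : Finset (Finset (Pairs n))) (a : Finset (Pairs n) → ℝ) :
    obsExp q lam K (fun y => (∑ G ∈ s, a G * componentProduct q lam K G y) ^ 2) =
      ∑ G ∈ s, ∑ H ∈ s, a G * a H * gram q lam K G H := by
  simp only [gram, ← obsExp_const_mul, ← obsExp_sum]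
  congr 1
  funext y
  rw [sq, sum_mul_sum]
  exact sum_congr rfl fun G _ => sum_congr rfl fun H _ => by ring

/-- The rescaling of the basis that makes the Gram matrix diagonally dominant: the basis function
of `G` is normalised and then given the weight `n ^ (-|V(G)| / 2)`. -/
def gramWeight {n : ℕ} (q lam : ℝ) (K : ℕ) (G : Finset (Pairs n)) : ℝ :=
  √((n : ℝ)⁻¹ ^ #(verts G) / mixedMoment q lam K G G)

namespace Regime

variable (h : Regime n K q lam δ t)
include h

lemma inv_pow_card_verts_div_pos (G : Finset (Pairs n)) :
    0 < (n : ℝ)⁻¹ ^ #(verts G) / mixedMoment q lam K G G :=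
  div_pos (pow_pos (inv_pos.2 (zero_lt_one.trans_le h.one_le_n)) _) (h.mixedMoment_self_pos G)

lemma gramWeight_pos (G : Finset (Pairs n)) : 0 < gramWeight q lam K G :=
  Real.sqrt_pos.2 (h.inv_pow_card_verts_div_pos G)

lemma gramWeight_sq (G : Finset (Pairs n)) :
    gramWeight q lam K G ^ 2 = (n : ℝ)⁻¹ ^ #(verts G) / mixedMoment q lam K G G :=
  Real.sq_sqrt (h.inv_pow_card_verts_div_pos G).le

/-- The weights turn the symmetric discount `n ^ (-|V(G) ∆ V(H)| / 2)` into the one-sided discount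
`n ^ (-|V(H) \ V(G)|)`, which is summable over `H`. -/
lemma abs_gram_mul_gramWeight_le (G H : Finset (Pairs n)) :
    |gram q lam K G H| * gramWeight q lam K H ≤
      (16 * √δ) ^ #(G ∆ H) * (n : ℝ)⁻¹ ^ #(verts H \ verts G) *
        (mixedMoment q lam K G G * gramWeight q lam K G) := by
  have hG := h.mixedMoment_self_pos G
  have hH := h.mixedMoment_self_pos H
  have wG := h.gramWeight_pos G
  have card_eq : #(verts G ∆ verts H) + #(verts H) =
      2 * #(verts H \ verts G) + #(verts G) := by
    have h1 := card_sdiff_add_card (verts G) (verts H)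
    have h2 := card_sdiff_add_card (verts H) (verts G)
    rw [union_comm] at h2
    rw [card_symmDiff_eq_add]
    omega
  have eta_sq : (16 * √δ) ^ 2 = 256 * δ := by
    rw [mul_pow, Real.sq_sqrt h.delta_pos.le]
    norm_num
  refine le_of_sq_le_sq ?_ (by positivity)
  calc (|gram q lam K G H| * gramWeight q lam K H) ^ 2
      = gram q lam K G H ^ 2 * ((n : ℝ)⁻¹ ^ #(verts H) / mixedMoment q lam K H H) := by
        rw [mul_pow, sq_abs, h.gramWeight_sq]
    _ ≤ (256 * δ) ^ #(G ∆ H) * (n : ℝ)⁻¹ ^ #(verts G ∆ verts H) *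
          (mixedMoment q lam K G G * mixedMoment q lam K H H) *
          ((n : ℝ)⁻¹ ^ #(verts H) / mixedMoment q lam K H H) :=
        mul_le_mul_of_nonneg_right (h.gram_sq_le G H) (h.inv_pow_card_verts_div_pos H).le
    _ = (256 * δ) ^ #(G ∆ H) * (n : ℝ)⁻¹ ^ (#(verts G ∆ verts H) + #(verts H)) *
          mixedMoment q lam K G G := by
        rw [pow_add]
        field_simp
    _ = (256 * δ) ^ #(G ∆ H) * (n : ℝ)⁻¹ ^ (2 * #(verts H \ verts G) + #(verts G)) *
          mixedMoment q lam K G G := by rw [card_eq]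
    _ = _ := by
        simp only [mul_pow _ _ 2, h.gramWeight_sq, pow_right_comm _ _ 2]
        rw [← mul_pow, eta_sq, pow_add, pow_mul]
        field_simp

lemma sum_erase_abs_gram_mul_gramWeight_le (hDδ : D * δ ≤ 1 / 2) (hδ : δ ≤ 1)
    (hθ : 16 * √δ * (4 * (D : ℝ) + 1) ^ 2 ≤ 1 / 10) {G : Finset (Pairs n)} (hG : #G ≤ D) :
    ∑ H ∈ (smallGraphs n D).erase G, |gram q lam K G H| * gramWeight q lam K H ≤
      1 / 2 * gram q lam K G G * gramWeight q lam K G := by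
  have n_pos : 0 < n := by exact_mod_cast zero_lt_one.trans_le h.one_le_n
  have w_pos := h.gramWeight_pos G
  have moment_pos := h.mixedMoment_self_pos G
  calc ∑ H ∈ (smallGraphs n D).erase G, |gram q lam K G H| * gramWeight q lam K H
      ≤ ∑ H ∈ (smallGraphs n D).erase G,
          (16 * √δ) ^ #(G ∆ H) * (n : ℝ)⁻¹ ^ #(verts H \ verts G) *
            (mixedMoment q lam K G G * gramWeight q lam K G) :=
        sum_le_sum fun H _ => h.abs_gram_mul_gramWeight_le G H
    _ ≤ 1 / 4 * (mixedMoment q lam K G G * gramWeight q lam K G) := by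
        rw [← sum_mul]
        exact mul_le_mul_of_nonneg_right
          (sum_smallGraphs_erase_self_le n_pos (by positivity) hθ hG) (by positivity)
    _ = 1 / 2 * (1 / 2 * mixedMoment q lam K G G) * gramWeight q lam K G := by ring
    _ ≤ 1 / 2 * gram q lam K G G * gramWeight q lam K G := by
        have := h.half_mixedMoment_le_gram_self hDδ hδ hG
        gcongr

lemma quarter_sum_le_obsExp_sq (hDδ : D * δ ≤ 1 / 2) (hδ : δ ≤ 1)
    (hθ : 16 * √δ * (4 * (D : ℝ) + 1) ^ 2 ≤ 1 / 10) (a : Finset (Pairs n) → ℝ) :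
    1 / 4 * ∑ G ∈ smallGraphs n D, a G ^ 2 * mixedMoment q lam K G G ≤
      obsExp q lam K
        (fun y => (∑ G ∈ smallGraphs n D, a G * componentProduct q lam K G y) ^ 2) := by
  calc 1 / 4 * ∑ G ∈ smallGraphs n D, a G ^ 2 * mixedMoment q lam K G G
      = 1 / 2 * ∑ G ∈ smallGraphs n D, a G ^ 2 * (1 / 2 * mixedMoment q lam K G G) := by
        simp only [mul_sum]
        exact sum_congr rfl fun G _ => by ring
    _ ≤ 1 / 2 * ∑ G ∈ smallGraphs n D, a G ^ 2 * gram q lam K G G := by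
        refine mul_le_mul_of_nonneg_left (sum_le_sum fun G hG => ?_) (by norm_num)
        exact mul_le_mul_of_nonneg_left
          (h.half_mixedMoment_le_gram_self hDδ hδ (mem_smallGraphs.1 hG)) (sq_nonneg _)
    _ ≤ ∑ G ∈ smallGraphs n D, ∑ H ∈ smallGraphs n D, a G * a H * gram q lam K G H :=
        half_sum_sq_mul_diag_le_of_weighted_diag_dominant a (gram_comm q lam K)
          h.gramWeight_pos fun G hG =>
            h.sum_erase_abs_gram_mul_gramWeight_le hDδ hδ hθ (mem_smallGraphs.1 hG)
    _ = _ := (obsExp_sum_componentProduct_sq q lam K _ a).symm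

end Regime

end Gram

/-! ### Low-degree polynomials in terms of the basis functions -/

section Span

variable {n : ℕ} (q lam : ℝ) (K : ℕ)

lemma Ymat_pair (y : EdgeConf n) (p : Pairs n) : Ymat n q y p.1.1 p.1.2 = edgeVar q y p := by
  have hp := p.2
  have ordered : (⟨(min p.1.1 p.1.2, max p.1.1 p.1.2), min_lt_max.2 hp.ne⟩ : Pairs n) = p :=
    Subtype.ext (Prod.ext (min_eq_left hp.le) (max_eq_right hp.le))
  rw [Ymat, dif_neg hp.ne, edgeVar, ordered]

lemma exists_edgeVar_pow_eq (k : ℕ) :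
    ∃ α β : ℝ, ∀ (y : EdgeConf n) (p : Pairs n), edgeVar q y p ^ k = β * edgeVar q y p + α := by
  induction k with
  | zero => exact ⟨1, 0, fun y p => by simp⟩
  | succ k ih =>
    obtain ⟨α, β, h⟩ := ih
    refine ⟨β * (q * (1 - q)), α + β * (1 - 2 * q), fun y p => ?_⟩
    rw [pow_succ, h, edgeVar]
    split_ifs <;> ring

lemma biUnion_ssubset_of_ssubset_components {G : Finset (Pairs n)} {𝒮 : Finset (Finset (Pairs n))}
    (h𝒮 : 𝒮 ⊂ components G) : 𝒮.biUnion id ⊂ G := by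
  obtain ⟨C, hC, hC𝒮⟩ := exists_of_ssubset h𝒮
  obtain ⟨p, hp⟩ := nonempty_of_mem_components hC
  refine (ssubset_iff_of_subset (biUnion_subset.2 fun B hB =>
    subset_of_mem_components (h𝒮.1 hB))).2 ⟨p, subset_of_mem_components hC hp, fun hp𝒮 => ?_⟩
  obtain ⟨B, hB, hpB⟩ := mem_biUnion.1 hp𝒮
  have hne : C ≠ B := fun h => hC𝒮 (h ▸ hB)
  exact disjoint_left.1 (pairwiseDisjoint_components G hC (h𝒮.1 hB) hne) hp hpB

lemma componentProduct_eq_sum (G : Finset (Pairs n)) :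
    componentProduct q lam K G = ∑ 𝒮 ∈ (components G).powerset,
      (∏ C ∈ components G \ 𝒮, -obsExp q lam K (edgeMonomial q C)) •
        edgeMonomial q (𝒮.biUnion id) := by
  funext y
  simp only [componentProduct, centredMonomial, sub_eq_add_neg, prod_add, Finset.sum_apply,
    Pi.smul_apply, smul_eq_mul]
  refine sum_congr rfl fun 𝒮 h𝒮 => ?_
  rw [edgeMonomial_biUnion q ((pairwiseDisjoint_components G).subset
    (coe_subset.2 (mem_powerset.1 h𝒮))), mul_comm]

/-- The functions of the observations spanned by the basis functions of the graphs with at most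
`D` edges. -/
def lowDegreeSpan (n D : ℕ) : Submodule ℝ (EdgeConf n → ℝ) :=
  Submodule.span ℝ (componentProduct q lam K '' (smallGraphs n D : Set (Finset (Pairs n))))

variable {D : ℕ}

/-- The expansion of a basis function into monomials is unitriangular with respect to inclusion of
graphs. -/
lemma edgeMonomial_mem_lowDegreeSpan {G : Finset (Pairs n)} (hG : #G ≤ D) :
    edgeMonomial q G ∈ lowDegreeSpan q lam K n D := by
  induction G using Finset.strongInduction with
  | H G ih =>
    have edgeMonomial_eq : edgeMonomial q G = componentProduct q lam K G -
        ∑ 𝒮 ∈ (components G).ssubsets,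
          (∏ C ∈ components G \ 𝒮, -obsExp q lam K (edgeMonomial q C)) •
            edgeMonomial q (𝒮.biUnion id) := by
      rw [componentProduct_eq_sum, ssubsets,
        ← add_sum_erase _ _ (mem_powerset_self (components G)), biUnion_components]
      simp
    rw [edgeMonomial_eq]
    refine Submodule.sub_mem _ (Submodule.subset_span ⟨G, mem_smallGraphs.2 hG, rfl⟩)
      (Submodule.sum_mem _ fun 𝒮 h𝒮 => Submodule.smul_mem _ _ ?_)
    have smaller := biUnion_ssubset_of_ssubset_components (mem_ssubsets.1 h𝒮)
    exact ih _ smaller ((card_le_card smaller.1).trans hG)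

lemma prod_edgeVar_pow_mem_lowDegreeSpan (m : Pairs n →₀ ℕ) (hm : #m.support ≤ D) :
    (fun y => ∏ p ∈ m.support, edgeVar q y p ^ m p) ∈ lowDegreeSpan q lam K n D := by
  choose α β affine using fun k => exists_edgeVar_pow_eq (n := n) q k
  have expansion : (fun y => ∏ p ∈ m.support, edgeVar q y p ^ m p) =
      ∑ S ∈ m.support.powerset,
        ((∏ p ∈ S, β (m p)) * ∏ p ∈ m.support \ S, α (m p)) • edgeMonomial q S := by
    funext y
    simp only [affine, prod_add, prod_mul_distrib, Finset.sum_apply, Pi.smul_apply, smul_eq_mul,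
      edgeMonomial, mul_right_comm]
  rw [expansion]
  exact Submodule.sum_mem _ fun S hS => Submodule.smul_mem _ _ <|
    edgeMonomial_mem_lowDegreeSpan q lam K ((card_le_card (mem_powerset.1 hS)).trans hm)

lemma evalY_mem_lowDegreeSpan {f : MvPolynomial (Pairs n) ℝ} (hf : f.totalDegree ≤ D) :
    evalY n q f ∈ lowDegreeSpan q lam K n D := by
  have expansion : evalY n q f =
      ∑ m ∈ f.support, f.coeff m • fun y => ∏ p ∈ m.support, edgeVar q y p ^ m p := by
    funext y
    simp only [evalY, MvPolynomial.eval_eq, Ymat_pair, Finset.sum_apply, Pi.smul_apply, smul_eq_mul]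
  rw [expansion]
  refine Submodule.sum_mem _ fun m hm => Submodule.smul_mem _ _
    (prod_edgeVar_pow_mem_lowDegreeSpan q lam K m ?_)
  calc #m.support = ∑ _p ∈ m.support, 1 := card_eq_sum_ones _
    _ ≤ ∑ p ∈ m.support, m p :=
        sum_le_sum fun p hp => Nat.one_le_iff_ne_zero.2 (Finsupp.mem_support_iff.1 hp)
    _ ≤ D := (MvPolynomial.le_totalDegree hm).trans hf

lemma exists_evalY_eq_sum {f : MvPolynomial (Pairs n) ℝ} (hf : f.totalDegree ≤ D) :
    ∃ a : Finset (Pairs n) → ℝ,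
      evalY n q f = fun y => ∑ G ∈ smallGraphs n D, a G * componentProduct q lam K G y := by
  obtain ⟨a, ha⟩ := (Submodule.mem_span_image_finset_iff_exists_fun' ℝ).1
    (evalY_mem_lowDegreeSpan q lam K hf)
  exact ⟨a, by simp [← ha, funext_iff, Finset.sum_apply]⟩

end Span

/-! ### Correlation of the basis functions with the signal -/

section Signal

variable {n K : ℕ} {i j : Fin n}

lemma xind_dependsOn (K : ℕ) (i j : Fin n) :
    DependsOn (xind n K i j) (({i, j} : Finset (Fin n)) : Set (Fin n)) := fun z z' h => by
  simp only [xind, h i (by simp), h j (by simp)]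

lemma labelExp_xind (hK : 0 < K) (hij : i ≠ j) : labelExp (fun z => xind n K i j z) = 0 := by
  have : NeZero K := ⟨hK.ne'⟩
  simpa using labelExp_mul_xind_eq_zero (K := K) {i} (mem_singleton_self i)
    (by simpa using hij.symm) (fun _ => 1) fun _ _ => rfl

lemma abs_xind_le_one (hK : 0 < K) (z : Lab n K) : |xind n K i j z| ≤ 1 := by
  have one_le : (1 : ℝ) ≤ K := by exact_mod_cast hK
  have inv_le : 1 / (K : ℝ) ≤ 1 := (div_le_one (by linarith)).2 one_le
  have inv_nonneg : 0 ≤ 1 / (K : ℝ) := by positivity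
  rw [xind, abs_le]
  split_ifs <;> constructor <;> linarith

lemma shiftLabels_of_mem [NeZero K] {A : Finset (Fin n)} {v : Fin n} (hv : v ∈ A) (a : Fin K)
    (z : Lab n K) : shiftLabels A a z v = z v + a := if_pos hv

lemma shiftLabels_of_notMem [NeZero K] {A : Finset (Fin n)} {v : Fin n} (hv : v ∉ A) (a : Fin K)
    (z : Lab n K) : shiftLabels A a z v = z v := if_neg hv

variable {q lam : ℝ}

lemma condExp_shiftLabels_verts [NeZero K] {F : EdgeConf n → ℝ} {C G : Finset (Pairs n)}
    (hF : DependsOn F (G : Set (Pairs n))) (hC : IsClosedIn C G) (a : Fin K) (z : Lab n K) :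
    condExp q lam (shiftLabels (verts C) a z) F = condExp q lam z F := by
  refine prodExp_congr_weight (sum_edgeLaw q lam _) (sum_edgeLaw q lam z) (fun p hp => ?_) hF
  have same_label_iff : shiftLabels (verts C) a z p.1.1 = shiftLabels (verts C) a z p.1.2 ↔
      z p.1.1 = z p.1.2 := by
    by_cases hpC : p ∈ C
    · rw [shiftLabels_of_mem (ends_subset_verts hpC (left_mem_ends p)),
        shiftLabels_of_mem (ends_subset_verts hpC (right_mem_ends p)), add_left_inj]
    · have outside (v) (hv : v ∈ ends p) : v ∉ verts C := fun hvC =>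
        disjoint_left.1 hC.2 hvC (ends_subset_verts (mem_sdiff.2 ⟨hp, hpC⟩) hv)
      rw [shiftLabels_of_notMem (outside _ (left_mem_ends p)),
        shiftLabels_of_notMem (outside _ (right_mem_ends p))]
  funext b
  simp only [edgeLaw, pEdge, same_label_iff]

variable (q lam K i j) in
/-- The correlation of the basis function of `G` with the centred indicator that `i` and `j` have
the same label. -/
def signal (G : Finset (Pairs n)) : ℝ :=
  labelExp (fun z : Lab n K => condExp q lam z (componentProduct q lam K G) * xind n K i j z)

variable {C G : Finset (Pairs n)}

lemma signal_eq_zero_of_notMem_verts (hK : 0 < K) (hij : i ≠ j) (hi : i ∉ verts G) :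
    signal K i j q lam G = 0 := by
  have : NeZero K := ⟨hK.ne'⟩
  refine labelExp_mul_xind_eq_zero {i} (mem_singleton_self i) (by simpa using hij.symm) _
    fun a z => condExp_dependsOn q lam (componentProduct_dependsOn q lam K G) fun v hv => ?_
  have v_ne : v ≠ i := fun h => hi (h ▸ hv)
  exact shiftLabels_of_notMem (mt mem_singleton.1 v_ne) a z

lemma signal_eq_zero_of_isClosedIn (hK : 0 < K) (hC : IsClosedIn C G) (hi : i ∈ verts C)
    (hj : j ∉ verts C) : signal K i j q lam G = 0 := by
  have : NeZero K := ⟨hK.ne'⟩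
  exact labelExp_mul_xind_eq_zero (verts C) hi hj _ fun a z =>
    condExp_shiftLabels_verts (componentProduct_dependsOn q lam K G) hC a z

/-- The centred monomial of `C` is independent of the other factors and of the two labels. -/
lemma signal_eq_zero_of_mem_components (hK : 0 < K) (hC : C ∈ components G) (hi : i ∉ verts C)
    (hj : j ∉ verts C) : signal K i j q lam G = 0 := by
  have factor : componentProduct q lam K G = fun y => centredMonomial q lam K C y *
      ∏ B ∈ (components G).erase C, centredMonomial q lam K B y := by
    funext y
    rw [componentProduct, ← mul_prod_erase _ _ hC]
  have rest_dependsOn : DependsOn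
      (fun y => ∏ B ∈ (components G).erase C, centredMonomial q lam K B y)
      ((G \ C : Finset (Pairs n)) : Set (Pairs n)) := dependsOn_prod fun B hB => by
    obtain ⟨hne, hBG⟩ := mem_erase.1 hB
    exact (centredMonomial_dependsOn q lam K B).mono <| coe_subset.2 <|
      subset_sdiff.2 ⟨subset_of_mem_components hBG, pairwiseDisjoint_components G hBG hC hne⟩
  have marked_disjoint : Disjoint (verts C) {i, j} := by
    simp [hi, hj]
  rw [signal, factor, labelExp_condExp_mul q lam hK (centredMonomial_dependsOn q lam K C)
    rest_dependsOn (xind_dependsOn K i j) (isClosedIn_of_mem_components hC).2 marked_disjoint,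
    obsExp_centredMonomial q lam hK, zero_mul]

lemma mem_components_of_signal_ne_zero (hK : 0 < K) (hij : i ≠ j)
    (hG : signal K i j q lam G ≠ 0) : G ∈ components G ∧ i ∈ verts G ∧ j ∈ verts G := by
  have hi : i ∈ verts G := by
    by_contra hi
    exact hG (signal_eq_zero_of_notMem_verts hK hij hi)
  rw [← biUnion_components G] at hi
  obtain ⟨p, hp, hip⟩ := mem_verts.1 hi
  obtain ⟨C, hC, hpC⟩ := mem_biUnion.1 hp
  have hiC : i ∈ verts C := ends_subset_verts hpC hip
  have hjC : j ∈ verts C := by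
    by_contra hjC
    exact hG (signal_eq_zero_of_isClosedIn hK (isClosedIn_of_mem_components hC) hiC hjC)
  have only_component (B) (hB : B ∈ components G) : B = C := by
    by_contra hne
    have disjoint_verts := disjoint_verts_of_mem_components hB hC hne
    exact hG (signal_eq_zero_of_mem_components hK hB
      (disjoint_right.1 disjoint_verts hiC) (disjoint_right.1 disjoint_verts hjC))
  have G_eq : G = C := by
    conv_lhs => rw [← biUnion_components G, eq_singleton_iff_unique_mem.2 ⟨hC, only_component⟩]
    exact singleton_biUnion
  rw [← G_eq] at hC hiC hjC
  exact ⟨hC, hiC, hjC⟩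

lemma components_of_self_mem (hG : G ∈ components G) : components G = {G} :=
  eq_singleton_iff_unique_mem.2 ⟨hG, fun _ hC => eq_of_isClosedIn_of_mem_components hG
    (isClosedIn_of_mem_components hC) (nonempty_of_mem_components hC)
    (subset_of_mem_components hC)⟩

lemma signal_eq_of_self_mem_components (hK : 0 < K) (hij : i ≠ j) (hG : G ∈ components G) :
    signal K i j q lam G =
      labelExp (fun z : Lab n K => condExp q lam z (edgeMonomial q G) * xind n K i j z) := by
  have condExp_eq (z : Lab n K) : condExp q lam z (componentProduct q lam K G) =
      condExp q lam z (edgeMonomial q G) + -obsExp q lam K (edgeMonomial q G) := by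
    have product_eq : componentProduct q lam K G =
        fun y => edgeMonomial q G y + -obsExp q lam K (edgeMonomial q G) * 1 := by
      funext y
      rw [componentProduct, components_of_self_mem hG, prod_singleton, centredMonomial]
      ring
    rw [product_eq, condExp, prodExp_add, prodExp_const_mul, prodExp_one (sum_edgeLaw q lam z),
      mul_one, condExp]
  simp only [signal, condExp_eq, add_mul]
  rw [labelExp_add, labelExp_const_mul, labelExp_xind hK hij, mul_zero, add_zero]

lemma Admissible.abs_signal_le (h : Admissible K q lam) (hij : i ≠ j) (hG : G ∈ components G) :
    |signal K i j q lam G| ≤ obsExp q lam K (edgeMonomial q G) := by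
  have condExp_nonneg (z : Lab n K) : 0 ≤ condExp q lam z (edgeMonomial q G) := by
    rw [condExp_edgeMonomial]
    exact mul_nonneg (pow_nonneg h.lam_pos.le _) (monochromatic_nonneg _ _)
  have xind_bounds (z : Lab n K) := abs_le.1 (abs_xind_le_one (i := i) (j := j) h.K_pos z)
  rw [signal_eq_of_self_mem_components h.K_pos hij hG, abs_le, neg_eq_neg_one_mul, obsExp,
    ← labelExp_const_mul]
  constructor <;> exact labelExp_mono fun z => by nlinarith [condExp_nonneg z, xind_bounds z]

lemma card_verts_sub_one_eq (hij : i ≠ j) (hi : i ∈ verts G) (hj : j ∈ verts G) :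
    #(verts G) - 1 = 1 + #(verts G \ {i, j}) := by
  have marked_subset : ({i, j} : Finset (Fin n)) ⊆ verts G := by
    simp [insert_subset_iff, hi, hj]
  have := card_sdiff_add_card_eq_card marked_subset
  rw [card_pair hij] at this
  omega

lemma Regime.signal_sq_le {δ t : ℝ} (h : Regime n K q lam δ t) (hij : i ≠ j)
    (G : Finset (Pairs n)) :
    signal K i j q lam G ^ 2 ≤
      (if G = ∅ then 0 else (n : ℝ)⁻¹ * (δ ^ #G * (n : ℝ)⁻¹ ^ #(verts G \ {i, j}))) *
        mixedMoment q lam K G G := by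
  have moment_pos := h.mixedMoment_self_pos G
  have hδ := h.delta_pos
  by_cases signal_zero : signal K i j q lam G = 0
  · rw [signal_zero, zero_pow two_ne_zero]
    split_ifs <;> positivity
  · obtain ⟨hG, hi, hj⟩ := mem_components_of_signal_ne_zero h.K_pos hij signal_zero
    rw [if_neg (nonempty_of_mem_components hG).ne_empty]
    calc signal K i j q lam G ^ 2 ≤ obsExp q lam K (edgeMonomial q G) ^ 2 :=
          sq_le_sq.2 ((h.abs_signal_le hij hG).trans (le_abs_self _))
      _ ≤ δ ^ #G * (n : ℝ)⁻¹ ^ (#(verts G) - 1) * mixedMoment q lam K G G :=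
          h.obsExp_edgeMonomial_sq_le hG
      _ = _ := by
          rw [card_verts_sub_one_eq hij hi hj, pow_add, pow_one]
          ring

end Signal

/-! ### The bound on the correlation -/

lemma sq_sum_mul_le_of_pos {ι : Type*} (s : Finset ι) (a c : ι → ℝ) {w : ι → ℝ}
    (hw : ∀ i, 0 < w i) :
    (∑ i ∈ s, a i * c i) ^ 2 ≤ (∑ i ∈ s, a i ^ 2 * w i) * ∑ i ∈ s, c i ^ 2 / w i :=
  sum_sq_le_sum_mul_sum_of_sq_le_mul s (fun i _ => mul_nonneg (sq_nonneg _) (hw i).le)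
    (fun i _ => div_nonneg (sq_nonneg _) (hw i).le) fun i _ => le_of_eq <| by
      have := hw i
      field_simp

namespace Regime

variable {n K D : ℕ} {q lam δ t : ℝ} {i j : Fin n} (h : Regime n K q lam δ t)
include h

lemma sum_signal_sq_div_le (hθ : δ * (2 * (D : ℝ) + 3) ^ 2 ≤ 1 / 2) (hij : i ≠ j) :
    ∑ G ∈ smallGraphs n D, signal K i j q lam G ^ 2 / mixedMoment q lam K G G ≤
      (n : ℝ)⁻¹ * (2 * (δ * (2 * (D : ℝ) + 3) ^ 2)) := by
  have n_pos : 0 < n := by exact_mod_cast zero_lt_one.trans_le h.one_le_n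
  calc ∑ G ∈ smallGraphs n D, signal K i j q lam G ^ 2 / mixedMoment q lam K G G
      ≤ ∑ G ∈ smallGraphs n D,
          if G = ∅ then 0 else (n : ℝ)⁻¹ * (δ ^ #G * (n : ℝ)⁻¹ ^ #(verts G \ {i, j})) :=
        sum_le_sum fun G _ => (div_le_iff₀ (h.mixedMoment_self_pos G)).2 (h.signal_sq_le hij G)
    _ = (n : ℝ)⁻¹ *
          ∑ G ∈ (smallGraphs n D).erase ∅, δ ^ #G * (n : ℝ)⁻¹ ^ #(verts G \ {i, j}) := by
        rw [← add_sum_erase _ _ empty_mem_smallGraphs, if_pos rfl, zero_add, mul_sum]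
        exact sum_congr rfl fun G hG => if_neg (ne_of_mem_erase hG)
    _ ≤ _ := mul_le_mul_of_nonneg_left
        (sum_smallGraphs_erase_empty_le n_pos h.delta_pos.le hθ card_le_two) (by positivity)

lemma sq_expec_mul_xind_le (hDδ : D * δ ≤ 1 / 2) (hδ : δ ≤ 1)
    (hη : 16 * √δ * (4 * (D : ℝ) + 1) ^ 2 ≤ 1 / 10)
    (hθ : δ * (2 * (D : ℝ) + 3) ^ 2 ≤ 1 / 2) (hij : i ≠ j)
    {f : MvPolynomial (Pairs n) ℝ} (hf : f.totalDegree ≤ D) :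
    expec n K q lam (fun z y => evalY n q f y * xind n K i j z) ^ 2 ≤
      4 / n * (2 * (δ * (2 * (D : ℝ) + 3) ^ 2)) *
        expec n K q lam (fun _ y => evalY n q f y ^ 2) := by
  obtain ⟨a, f_eq⟩ := exists_evalY_eq_sum q lam K hf
  have correlation_eq : expec n K q lam (fun z y => evalY n q f y * xind n K i j z) =
      ∑ G ∈ smallGraphs n D, a G * signal K i j q lam G := by
    rw [expec_eq_labelExp_condExp q lam (evalY n q f), f_eq]
    simp only [condExp, prodExp_sum, prodExp_const_mul, sum_mul, labelExp_sum, mul_assoc,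
      labelExp_const_mul, signal]
  have second_moment_ge :
      ∑ G ∈ smallGraphs n D, a G ^ 2 * mixedMoment q lam K G G ≤
        4 * expec n K q lam (fun _ y => evalY n q f y ^ 2) := by
    rw [expec_eq_obsExp q lam (fun y => evalY n q f y ^ 2), f_eq]
    linarith [h.quarter_sum_le_obsExp_sq hDδ hδ hη a]
  have moment_pos (G : Finset (Pairs n)) := h.mixedMoment_self_pos G
  calc expec n K q lam (fun z y => evalY n q f y * xind n K i j z) ^ 2
      ≤ (∑ G ∈ smallGraphs n D, a G ^ 2 * mixedMoment q lam K G G) *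
          ∑ G ∈ smallGraphs n D, signal K i j q lam G ^ 2 / mixedMoment q lam K G G := by
        rw [correlation_eq]
        exact sq_sum_mul_le_of_pos _ a (signal K i j q lam) moment_pos
    _ ≤ (4 * expec n K q lam (fun _ y => evalY n q f y ^ 2)) *
          ((n : ℝ)⁻¹ * (2 * (δ * (2 * (D : ℝ) + 3) ^ 2))) := by
        gcongr
        · exact sum_nonneg fun G _ => div_nonneg (sq_nonneg _) (moment_pos G).le
        · exact (sum_nonneg fun G _ => mul_nonneg (sq_nonneg _) (moment_pos G).le).trans
            second_moment_ge
        · exact h.sum_signal_sq_div_le hθ hij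
    _ = _ := by ring

lemma Corr2_le (hDδ : D * δ ≤ 1 / 2) (hδ : δ ≤ 1)
    (hη : 16 * √δ * (4 * (D : ℝ) + 1) ^ 2 ≤ 1 / 10)
    (hθ : δ * (2 * (D : ℝ) + 3) ^ 2 ≤ 1 / 2) (hij : i ≠ j) :
    Corr2 n K D q lam i j ≤ 4 / n * (2 * (δ * (2 * (D : ℝ) + 3) ^ 2)) := by
  have hδ0 := h.delta_pos
  refine Real.sSup_le ?_ (by positivity)
  rintro r ⟨f, hf, second_moment_pos, rfl⟩
  exact (div_le_iff₀ second_moment_pos).2 (h.sq_expec_mul_xind_le hDδ hδ hη hθ hij hf)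

end Regime

lemma const_mul_sq_le_rpow {x c : ℝ} (hx : 2 ≤ x) (hc : 14 ≤ c) :
    4096 * x ^ 2 ≤ x ^ c := by
  calc 4096 * x ^ 2 = 2 ^ 12 * x ^ 2 := by norm_num
    _ ≤ x ^ 12 * x ^ 2 := by gcongr
    _ = x ^ (14 : ℝ) := by
        rw [← pow_add]
        exact (Real.rpow_natCast x 14).symm
    _ ≤ x ^ c := Real.rpow_le_rpow_of_exponent_le (by linarith) hc

lemma Regime.Corr2_le_pow {n K D : ℕ} {q lam ε t : ℝ} {i j : Fin n}
    (h : Regime n K q lam (ε ^ 16) t) (hD : 2 ≤ D) (hε : 0 < ε) (hεD : 4096 * (D : ℝ) ^ 2 ≤ ε⁻¹)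
    (hij : i ≠ j) : Corr2 n K D q lam i j ≤ 4 / n * ε ^ 15 := by
  have D_ge : (2 : ℝ) ≤ D := by exact_mod_cast hD
  have ε_mul_sq_le : ε * (D : ℝ) ^ 2 ≤ 1 / 4096 := by
    have := mul_le_mul_of_nonneg_left hεD hε.le
    rw [mul_inv_cancel₀ hε.ne'] at this
    linarith
  have ε_mul_le : ε * (2 * (D : ℝ) + 3) ^ 2 ≤ 1 / 2 := by nlinarith
  have ε_le_one : ε ≤ 1 := by nlinarith
  have pow_le (k : ℕ) (hk : k ≠ 0) : ε ^ k ≤ ε := pow_le_of_le_one hε.le ε_le_one hk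
  have sqrt_eq : √(ε ^ 16) = ε ^ 8 := by
    rw [show ε ^ 16 = (ε ^ 8) ^ 2 by ring, Real.sqrt_sq (by positivity)]
  have diagonal_le : D * ε ^ 16 ≤ 1 / 2 := by nlinarith [pow_le 16 (by norm_num)]
  have gram_le : 16 * √(ε ^ 16) * (4 * (D : ℝ) + 1) ^ 2 ≤ 1 / 10 := by
    rw [sqrt_eq]
    calc 16 * ε ^ 8 * (4 * (D : ℝ) + 1) ^ 2 ≤ 16 * ε * (4 * (D : ℝ) + 1) ^ 2 := by
          gcongr
          exact pow_le 8 (by norm_num)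
      _ ≤ 1 / 10 := by nlinarith
  have signal_le : ε ^ 16 * (2 * (D : ℝ) + 3) ^ 2 ≤ 1 / 2 :=
    (mul_le_mul_of_nonneg_right (pow_le 16 (by norm_num)) (sq_nonneg _)).trans ε_mul_le
  calc Corr2 n K D q lam i j ≤ 4 / n * (2 * (ε ^ 16 * (2 * (D : ℝ) + 3) ^ 2)) :=
        h.Corr2_le diagonal_le (pow_le_one₀ hε.le ε_le_one) gram_le signal_le hij
    _ = 4 / n * (ε ^ 15 * (2 * (ε * (2 * (D : ℝ) + 3) ^ 2))) := by ring
    _ ≤ 4 / n * (ε ^ 15 * 1) := by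
        gcongr
        linarith
    _ = 4 / n * ε ^ 15 := by rw [mul_one]

theorem statement1 (n K D : ℕ) (q lam cs : ℝ)
    (hcs : 14 ≤ cs) (hD : 2 ≤ D) (hq0 : 0 ≤ q) (hq : q ≤ 1 / 2)
    (hql : q + 2 * lam ≤ 1) (hlam : 0 < lam) (hK : 2 ≤ K) (hKn : K ≤ n)
    (hKsqrt : Real.sqrt n ≤ K)
    (hcond : 2 * (D : ℝ) ^ (16 * cs) * lam ≤
      (lam / K + q * (1 - q)) ^ (1 - Real.log K / Real.log n)) :
    Corr2 n K D q lam ⟨0, by omega⟩ ⟨1, by omega⟩ ≤ 4 / n * (D : ℝ) ^ (-(15 * cs)) := by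
  have D_ge : (2 : ℝ) ≤ D := by exact_mod_cast hD
  have M_ge : (1 : ℝ) ≤ (D : ℝ) ^ (16 * cs) := Real.one_le_rpow (by linarith) (by linarith)
  obtain ⟨t, regime⟩ :=
    Admissible.exists_regime ⟨hq0, hq, hql, hlam, hK⟩ hKn hKsqrt M_ge hcond
  have pow_eq (k : ℕ) : (D : ℝ) ^ (-(k * cs)) = ((D : ℝ) ^ (-cs)) ^ k := by
    rw [← Real.rpow_mul_natCast (by positivity), neg_mul, mul_comm]
  have D_rpow_ge : 4096 * (D : ℝ) ^ 2 ≤ ((D : ℝ) ^ (-cs))⁻¹ := by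
    rw [Real.rpow_neg (by positivity), inv_inv]
    exact const_mul_sq_le_rpow D_ge hcs
  rw [← Real.rpow_neg (by positivity)] at regime
  have delta_eq := pow_eq 16
  have target_eq := pow_eq 15
  push_cast at delta_eq target_eq
  rw [delta_eq] at regime
  rw [target_eq]
  exact regime.Corr2_le_pow hD (by positivity) D_rpow_ge (by simp)

end SBM
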